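/- For every integer d ≥ 1 there exist a constant c = c(d) < ∞ and a translation-equivariant matching rule Φ such that for all real r ≥ 2, ℙ(Z_Φ > r) ≤ c (log r)^4 r^{−β}, where β = β(d) = 2d/(d+4). -/

import Mathlib

open MeasureTheory ENNReal

noncomputable section

/-- Sites: the lattice `ℤ^d`. -/
abbrev Site (d : ℕ) := Fin d → ℤ

/-- Configurations: elements of `{0,1}^{ℤ^d}`, encoded with `Bool`. -/
abbrev Config (d : ℕ) := Site d → Bool

/-- The translation `θ^z` acting on configurations: `(θ^z γ)(x) = γ(x - z)`. -/
def shiftCfg {d : ℕ} (z : Site d) (γ : Config d) : Config d := fun x => γ (x - z)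

/-- `φ` is a matching on `γ`: an involutive bijection matching ones to zeros. -/
def IsMatching {d : ℕ} (γ : Config d) (φ : Site d → Site d) : Prop :=
  Function.Bijective φ ∧ (∀ x, φ (φ x) = x) ∧ ∀ x, γ (φ x) = !(γ x)

/-- `Φ` is a matching rule with respect to the measure `P`. -/
def IsMatchingRule {d : ℕ} (P : Measure (Config d)) (Φ : Config d → Site d → Site d) : Prop :=
  (∀ x : Site d, Measurable fun γ => Φ γ x) ∧ ∀ᵐ γ ∂P, IsMatching γ (Φ γ)

/-- `Φ` is translation-equivariant with respect to `P`. -/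
def IsEquivariant {d : ℕ} (P : Measure (Config d)) (Φ : Config d → Site d → Site d) : Prop :=
  ∀ z x : Site d, ∀ᵐ γ ∂P, Φ (shiftCfg z γ) (x + z) = Φ γ x + z

/-- `P` is the product measure with i.i.d. Bernoulli(1/2) coordinates, characterized by
its values on cylinder events. -/
def IsBernoulliHalfProduct {d : ℕ} (P : Measure (Config d)) : Prop :=
  IsProbabilityMeasure P ∧
    ∀ (s : Finset (Site d)) (f : Site d → Bool),
      P {γ | ∀ x ∈ s, γ x = f x} = (1 / 2 : ℝ≥0∞) ^ s.card

/-- `Z_Φ(γ) = ‖Φ(γ, 0)‖`, the `ℓ^∞` distance from the origin to its partner. -/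
def ZΦ {d : ℕ} (Φ : Config d → Site d → Site d) (γ : Config d) : ℝ := ‖Φ γ 0‖

/-- Embedding of the lattice in `ℝ^d`. -/
def toR {d : ℕ} (x : Site d) : Fin d → ℝ := fun i => (x i : ℝ)

/-- The first standard basis vector `e₁`. -/
def e1 (d : ℕ) : Site d := fun i => if (i : ℕ) = 0 then 1 else 0

/-- `x` is a `k`-seed for `γ`. -/
def IsSeed {d : ℕ} (γ : Config d) (k : ℕ) (x : Site d) : Prop :=
  γ x = true ∧ ∀ n : ℕ, 1 ≤ n → n ≤ k - 1 → γ (x + (n : ℤ) • e1 d) = false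

/-- `r_k = (2^k k²)^{1/d} + 1/2`. -/
def rr (d k : ℕ) : ℝ := ((2 : ℝ) ^ k * (k : ℝ) ^ 2) ^ ((d : ℝ)⁻¹) + 1 / 2

/-- The shift `s_k = ⌊100 r_k⌋ e₁`. -/
def ss (d k : ℕ) : Site d := ⌊(100 : ℝ) * rr d k⌋ • e1 d

/-- `W_k(γ)`: the union of all `k`-cutters. -/
def cutters {d : ℕ} (γ : Config d) (k : ℕ) : Set (Fin d → ℝ) :=
  ⋃ x ∈ {x : Site d | IsSeed γ k (x - ss d k)}, {y : Fin d → ℝ | ‖y - toR x‖ = rr d k}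

/-- The `k`-blob containing the point `p ∈ ℝ^d`: the connected component of `p` in the
complement of all `j`-cutters with `j > k`. -/
def blob {d : ℕ} (γ : Config d) (k : ℕ) (p : Fin d → ℝ) : Set (Fin d → ℝ) :=
  connectedComponentIn (⋃ j ∈ {j : ℕ | k < j}, cutters γ j)ᶜ p

/-- The `k`-clump of a site `x`: the lattice points of the `k`-blob containing `x`. -/
def clump {d : ℕ} (γ : Config d) (k : ℕ) (x : Site d) : Set (Site d) :=
  {y : Site d | toR y ∈ blob γ k (toR x)}

/-- The event `E_k`: the cube `S(-s_k, r_k - 1)` contains a `k`-seed. -/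
def Ek (d k : ℕ) : Set (Config d) :=
  {γ | ∃ y : Site d, IsSeed γ k y ∧ ‖toR y + toR (ss d k)‖ ≤ rr d k - 1}

/-- A `k`-seed lying in the annulus `S(-s_k, r_k + s) \ S(-s_k, r_k - s)`. -/
def SeedInAnnulus {d : ℕ} (γ : Config d) (k : ℕ) (s : ℝ) (y : Site d) : Prop :=
  IsSeed γ k y ∧ ‖toR y + toR (ss d k)‖ ≤ rr d k + s ∧ rr d k - s < ‖toR y + toR (ss d k)‖

/-- The event `U_k(s)`: `S(-s_k, r_k + s) \ S(-s_k, r_k - s)` contains a `k`-seed. -/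
def Uk (d : ℕ) (k : ℕ) (s : ℝ) : Set (Config d) :=
  {γ | ∃ y : Site d, SeedInAnnulus γ k s y}

/-- The event `C_k(s) = ∪_{j ≥ k} U_j(s)`. -/
def Ck (d : ℕ) (k : ℕ) (s : ℝ) : Set (Config d) :=
  {γ | ∃ j : ℕ, k ≤ j ∧ γ ∈ Uk d j s}

/-- `±1`-valued spin `2γ(x) - 1`. -/
def pm1 {d : ℕ} (γ : Config d) (y : Site d) : ℤ := if γ y then 1 else -1

/-- `Φ` matches maximally within clumps: a.s. every clump is finite and the number of
sites of each `k`-clump `L` matched outside `L` equals `|Σ_{x ∈ L} (2γ(x) - 1)|`. -/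
def MatchesMaximally {d : ℕ} (P : Measure (Config d))
    (Φ : Config d → Site d → Site d) : Prop :=
  ∀ᵐ γ ∂P, ∀ k : ℕ, 1 ≤ k → ∀ x : Site d,
    (clump γ k x).Finite ∧
      (({y ∈ clump γ k x | Φ γ y ∉ clump γ k x}.ncard : ℤ)
        = |∑ᶠ y ∈ clump γ k x, pm1 γ y|)



/-! ### Basic facts on the Bernoulli product measure -/

theorem bern_restrict {d : ℕ} {P : Measure (Config d)} (hP : IsBernoulliHalfProduct P) 
    (s : Finset (Site d)) (g : s → Bool) :
    P.map s.restrict {g} = (1 / 2 : ℝ≥0∞) ^ s.card := by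
  classical
  rw [Measure.map_apply (Finset.measurable_restrict s) (measurableSet_singleton g),
    ← hP.2 s (fun x => if h : x ∈ s then g ⟨x, h⟩ else false)]
  congr 1
  ext γ
  simp only [Set.mem_preimage, Set.mem_singleton_iff, Set.mem_setOf_eq, funext_iff, Subtype.forall,
    Finset.restrict]
  refine forall_congr' fun x => ?_
  constructor
  · intro h hx
    simp [hx, h hx]
  · intro h hx
    simpa [hx] using h hx

theorem bern_unique {d : ℕ} {P Q : Measure (Config d)} (hP : IsBernoulliHalfProduct P)
    (hQ : IsBernoulliHalfProduct Q) : P = Q := by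
  have := hP.1
  have := hQ.1
  have h1 : IsProjectiveLimit P (fun s : Finset (Site d) => Q.map s.restrict) := by
    intro s
    have i1 : Countable (s → Bool) := inferInstance
    refine Measure.ext_of_singleton fun g => ?_
    rw [bern_restrict hP, bern_restrict hQ]
  have h2 : IsProjectiveLimit Q (fun s : Finset (Site d) => Q.map s.restrict) := fun s => rfl
  exact h1.unique h2

theorem measurable_shiftCfg {d : ℕ} (z : Site d) : Measurable (shiftCfg z : Config d → Config d) :=
  measurable_pi_lambda _ fun x => measurable_pi_apply (x - z)

theorem bern_shift {d : ℕ} {P : Measure (Config d)} (hP : IsBernoulliHalfProduct P) (z : Site d) :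
    P.map (shiftCfg z) = P := by
  classical
  have := hP.1
  have hm := measurable_shiftCfg (d := d) z
  refine bern_unique ⟨Measure.isProbabilityMeasure_map hm.aemeasurable, fun s f => ?_⟩ hP
  rw [Measure.map_apply hm]
  · have := hP.2 (s.image (fun x => x - z)) (fun x => f (x + z))
    rw [Finset.card_image_of_injective _ (sub_left_injective)] at this
    rw [← this]
    congr 1
    ext γ
    simp [shiftCfg]
  · have : {γ : Config d | ∀ x ∈ s, γ x = f x} = ⋂ x ∈ s, (fun γ : Config d => γ x) ⁻¹' {f x} := by
      ext γ; simp
    rw [this]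
    exact Finset.measurableSet_biInter _ fun x _ =>
      measurable_pi_apply x (measurableSet_singleton _)

/-- flip all coins in `J` -/
def flipOn {d : ℕ} (J : Set (Site d)) (γ : Config d) : Config d :=
  fun x => (open Classical in if x ∈ J then !(γ x) else γ x)

theorem measurable_flipOn {d : ℕ} (J : Set (Site d)) :
    Measurable (flipOn J : Config d → Config d) := by
  classical
  refine measurable_pi_lambda _ fun x => ?_
  unfold flipOn
  by_cases hx : x ∈ J
  · simp only [hx, if_true]
    exact (measurable_of_countable (fun b : Bool => !b)).comp (measurable_pi_apply x)
  · simp only [hx, if_false]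
    exact measurable_pi_apply x

theorem bern_flip {d : ℕ} {P : Measure (Config d)} (hP : IsBernoulliHalfProduct P)
    (J : Set (Site d)) : P.map (flipOn J) = P := by
  classical
  have := hP.1
  have hm := measurable_flipOn (d := d) J
  refine bern_unique ⟨Measure.isProbabilityMeasure_map hm.aemeasurable, fun s f => ?_⟩ hP
  rw [Measure.map_apply hm]
  · rw [← hP.2 s (flipOn J f)]
    congr 1
    ext γ
    simp only [flipOn, Set.mem_preimage, Set.mem_setOf_eq]
    refine forall_congr' fun x => forall_congr' fun hx => ?_
    split_ifs
    · cases γ x <;> cases f x <;> simp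
    · rfl
  · have : {γ : Config d | ∀ x ∈ s, γ x = f x} = ⋂ x ∈ s, (fun γ : Config d => γ x) ⁻¹' {f x} := by
      ext γ; simp
    rw [this]
    exact Finset.measurableSet_biInter _ fun x _ =>
      measurable_pi_apply x (measurableSet_singleton _)

theorem bern_indep {d : ℕ} {P : Measure (Config d)} (hP : IsBernoulliHalfProduct P) :
    ProbabilityTheory.iIndepFun (fun (x : Site d) (γ : Config d) => γ x) P := by
  classical
  let ν : Measure Bool := (PMF.uniformOfFintype Bool).toMeasure
  have hν : ∀ b, ν {b} = 1 / 2 := by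
    intro b
    simp [ν, PMF.toMeasure_apply_singleton]
  have hQ : IsBernoulliHalfProduct (Measure.infinitePi (fun _ : Site d => ν)) := by
    refine ⟨inferInstance, fun s f => ?_⟩
    have : {γ : Config d | ∀ x ∈ s, γ x = f x} = Set.pi s (fun x => {f x}) := by
      ext γ; simp [Set.mem_pi]
    rw [this, Measure.infinitePi_pi _ (fun _ _ => measurableSet_singleton _)]
    simp [hν]
  rw [bern_unique hP hQ]
  exact ProbabilityTheory.iIndepFun_infinitePi (X := fun _ b => b) (fun _ => measurable_id)

/-- The event `E` is determined by the coins in `S`. -/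
def DepOn {d : ℕ} (E : Set (Config d)) (S : Finset (Site d)) : Prop :=
  ∀ γ γ' : Config d, (∀ x ∈ S, γ x = γ' x) → γ ∈ E → γ' ∈ E

theorem DepOn.eq_preimage {d : ℕ} {E : Set (Config d)} {S : Finset (Site d)} (h : DepOn E S) :
    (fun γ (i : S) => γ i) ⁻¹' ((fun (γ : Config d) (i : S) => γ i) '' E) = E := by
  ext γ
  constructor
  · rintro ⟨γ', h', he⟩
    exact h γ' γ (fun x hx => congrFun he ⟨x, hx⟩) h'
  · intro h'
    exact ⟨γ, h', rfl⟩

theorem DepOn.measurableSet {d : ℕ} {E : Set (Config d)} {S : Finset (Site d)} (h : DepOn E S) :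
    MeasurableSet E := by
  rw [← h.eq_preimage]
  have : Measurable (fun (γ : Config d) (i : S) => γ i) :=
    measurable_pi_lambda _ fun i => measurable_pi_apply _
  exact this (MeasurableSet.of_discrete)

theorem indep_two {d : ℕ} {P : Measure (Config d)} (hP : IsBernoulliHalfProduct P)
    {E E' : Set (Config d)} {S T : Finset (Site d)} (hE : DepOn E S) (hE' : DepOn E' T)
    (hST : Disjoint S T) : P (E ∩ E') = P E * P E' := by
  have h := (bern_indep hP).indepFun_finset S T hST (fun x => measurable_pi_apply x)
  have := h.measure_inter_preimage_eq_mul ((fun (γ : Config d) (i : S) => γ i) '' E)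
    ((fun (γ : Config d) (i : T) => γ i) '' E') MeasurableSet.of_discrete MeasurableSet.of_discrete
  rwa [hE.eq_preimage, hE'.eq_preimage] at this

theorem DepOn.compl {d : ℕ} {E : Set (Config d)} {S : Finset (Site d)} (h : DepOn E S) :
    DepOn Eᶜ S := fun γ γ' hh h1 h2 => h1 (h γ' γ (fun x hx => (hh x hx).symm) h2)

theorem DepOn.biInter {d : ℕ} {ι : Type*} [DecidableEq (Site d)] {E : ι → Set (Config d)}
    {S : ι → Finset (Site d)} (h : ∀ i, DepOn (E i) (S i)) (I : Finset ι) :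
    DepOn (⋂ i ∈ I, E i) (I.biUnion S) := by
  intro γ γ' hh h1
  simp only [Set.mem_iInter] at h1 ⊢
  exact fun i hi => h i γ γ' (fun x hx => hh x (Finset.mem_biUnion.2 ⟨i, hi, hx⟩)) (h1 i hi)

theorem indep_many {d : ℕ} {P : Measure (Config d)} (hP : IsBernoulliHalfProduct P)
    {ι : Type*} {E : ι → Set (Config d)} {S : ι → Finset (Site d)} (h : ∀ i, DepOn (E i) (S i))
    (hS : ∀ i j, i ≠ j → Disjoint (S i) (S j)) (I : Finset ι) :
    P (⋂ i ∈ I, E i) = ∏ i ∈ I, P (E i) := by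
  classical
  have := hP.1
  induction I using Finset.induction_on with
  | empty => simp
  | insert a I ha ih =>
    rw [Finset.prod_insert ha, Finset.set_biInter_insert, ← ih]
    refine indep_two hP (h a) (DepOn.biInter h I) ?_
    rw [Finset.disjoint_biUnion_right]
    intro i hi
    exact hS _ _ (fun hh => ha (hh ▸ hi))

/-! ### Cuts -/

/-- There is a cut between `x` and `x + e₁`. -/
def Cut {d : ℕ} (γ : Config d) (x : Site d) : Prop :=
  γ (x + (-1 : ℤ) • e1 d) = γ (x + (0 : ℤ) • e1 d) ∧
  γ (x + (1 : ℤ) • e1 d) ≠ γ (x + (2 : ℤ) • e1 d) ∧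
  γ (x + (2 : ℤ) • e1 d) = γ (x + (3 : ℤ) • e1 d)

def win {d : ℕ} (x : Site d) : Finset (Site d) :=
  (Finset.Icc (-1 : ℤ) 3).image (fun t => x + t • e1 d)

theorem e1_zero {d : ℕ} (hd : 1 ≤ d) : e1 d ⟨0, hd⟩ = 1 := by simp [e1]

theorem mem_win {d : ℕ} {x : Site d} {t : ℤ} (h1 : -1 ≤ t) (h2 : t ≤ 3) :
    x + t • e1 d ∈ win x := Finset.mem_image.2 ⟨t, Finset.mem_Icc.2 ⟨h1, h2⟩, rfl⟩

theorem line_inj {d : ℕ} (hd : 1 ≤ d) (x : Site d) :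
    Function.Injective (fun t : ℤ => x + t • e1 d) := by
  intro s t h
  have := congrFun h ⟨0, hd⟩
  simpa [e1_zero hd] using this

theorem depOn_cut {d : ℕ} (x : Site d) : DepOn {γ | Cut γ x} (win x) := by
  intro γ γ' h hc
  have h' : ∀ t : ℤ, -1 ≤ t → t ≤ 3 → γ (x + t • e1 d) = γ' (x + t • e1 d) :=
    fun t h1 h2 => h _ (mem_win h1 h2)
  simp only [Set.mem_setOf_eq, Cut] at hc ⊢
  rwa [← h' (-1) (by norm_num) (by norm_num), ← h' 0 (by norm_num) (by norm_num),
    ← h' 1 (by norm_num) (by norm_num), ← h' 2 (by norm_num) (by norm_num),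
    ← h' 3 (by norm_num) (by norm_num)]

/-- Pattern around a cut. -/
def cutPat (p : Bool × Bool) (t : ℤ) : Bool :=
  if t ≤ 0 then p.1 else if t = 1 then p.2 else !p.2

theorem prob_cut {d : ℕ} (hd : 1 ≤ d) {P : Measure (Config d)} (hP : IsBernoulliHalfProduct P)
    (x : Site d) : P {γ | Cut γ x} = 1 / 8 := by
  classical
  have := hP.1
  have hE : {γ | Cut γ x} = ⋃ p : Bool × Bool,
      {γ : Config d | ∀ y ∈ win x, γ y = cutPat p (y ⟨0, hd⟩ - x ⟨0, hd⟩)} := by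
    ext γ
    simp only [Set.mem_setOf_eq, Set.mem_iUnion, win, Finset.mem_image, Finset.mem_Icc,
      forall_exists_index, and_imp, Cut]
    have hpat : ∀ (p : Bool × Bool) (t : ℤ),
        cutPat p ((x + t • e1 d) ⟨0, hd⟩ - x ⟨0, hd⟩) = cutPat p t := by
      intro p t; simp [e1_zero hd]
    constructor
    · rintro ⟨h1, h2, h3⟩
      refine ⟨(γ (x + (0 : ℤ) • e1 d), γ (x + (1 : ℤ) • e1 d)), ?_⟩
      rintro y t ht1 ht2 rfl
      rw [hpat]
      have : t = -1 ∨ t = 0 ∨ t = 1 ∨ t = 2 ∨ t = 3 := by omega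
      rcases this with rfl | rfl | rfl | rfl | rfl
      · simpa [cutPat] using h1
      · simp [cutPat]
      · simp [cutPat]
      · simp only [cutPat]
        revert h2
        cases γ (x + (1 : ℤ) • e1 d) <;> cases γ (x + (2 : ℤ) • e1 d) <;> simp
      · rw [← h3]
        simp only [cutPat]
        revert h2
        cases γ (x + (1 : ℤ) • e1 d) <;> cases γ (x + (2 : ℤ) • e1 d) <;> simp
    · rintro ⟨p, hp⟩
      have h' : ∀ t : ℤ, -1 ≤ t → t ≤ 3 → γ (x + t • e1 d) = cutPat p t := by
        intro t h1 h2
        rw [hp _ t h1 h2 rfl, hpat]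
      rw [h' (-1) (by norm_num) (by norm_num), h' 0 (by norm_num) (by norm_num),
        h' 1 (by norm_num) (by norm_num), h' 2 (by norm_num) (by norm_num),
        h' 3 (by norm_num) (by norm_num)]
      simp [cutPat]
  have hcard : (win x).card = 5 := by
    rw [win, Finset.card_image_of_injective _ (line_inj hd x)]
    simp
  rw [hE, measure_iUnion]
  · simp only [hP.2, hcard, tsum_fintype, Finset.sum_const, Finset.card_univ, Fintype.card_prod,
      Fintype.card_bool, nsmul_eq_mul]
    rw [← ENNReal.toReal_eq_toReal_iff' (by finiteness) (by finiteness)]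
    norm_num
  · intro p q hpq
    rw [Function.onFun, Set.disjoint_left]
    intro γ h1 h2
    apply hpq
    have h' : ∀ t : ℤ, -1 ≤ t → t ≤ 3 → cutPat p t = cutPat q t := by
      intro t ht1 ht2
      have a := h1 _ (mem_win (x := x) ht1 ht2)
      have b := h2 _ (mem_win (x := x) ht1 ht2)
      have e : (x + t • e1 d) ⟨0, hd⟩ - x ⟨0, hd⟩ = t := by simp [e1_zero hd]
      rw [e] at a b
      rw [← a, ← b]
    have a := h' 0 (by norm_num) (by norm_num)
    have b := h' 1 (by norm_num) (by norm_num)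
    simp [cutPat] at a b
    exact Prod.ext a b
  · intro p
    refine DepOn.measurableSet (S := win x) fun γ γ' hh h1 y hy => ?_
    rw [← hh y hy]
    exact h1 y hy

theorem prob_all_cut {d : ℕ} (hd : 1 ≤ d) {P : Measure (Config d)} (hP : IsBernoulliHalfProduct P)
    {k : ℕ} (b : Fin k → Site d)
    (hb : ∀ j j', j ≠ j' → Disjoint (win (b j)) (win (b j'))) :
    P {γ | ∀ j, Cut γ (b j)} = (1 / 8) ^ k := by
  have := indep_many hP (E := fun j => {γ | Cut γ (b j)}) (S := fun j => win (b j))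
    (fun j => depOn_cut _) hb Finset.univ
  simp only [prob_cut hd hP, Finset.prod_const, Finset.card_univ, Fintype.card_fin] at this
  rw [← this]
  congr 1
  ext γ
  simp

theorem prob_no_block {d : ℕ} (hd : 1 ≤ d) {P : Measure (Config d)}
    (hP : IsBernoulliHalfProduct P) {ι : Type*} [Fintype ι]
    {k : ℕ} (b : ι → Fin k → Site d)
    (hb : ∀ i j i' j', (i, j) ≠ (i', j') → Disjoint (win (b i j)) (win (b i' j'))) :
    P {γ | ∀ i, ¬ ∀ j, Cut γ (b i j)} = (1 - (1 / 8) ^ k) ^ Fintype.card ι := by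
  classical
  have := hP.1
  have hdep : ∀ i, DepOn {γ | ∀ j, Cut γ (b i j)} (Finset.univ.biUnion fun j => win (b i j)) := by
    intro i
    have := DepOn.biInter (E := fun j => {γ | Cut γ (b i j)}) (S := fun j => win (b i j))
      (fun j => depOn_cut _) Finset.univ
    convert this using 1
    ext γ; simp
  have h2 := indep_many hP (E := fun i => {γ | ∀ j, Cut γ (b i j)}ᶜ)
    (S := fun i => Finset.univ.biUnion fun j => win (b i j)) (fun i => (hdep i).compl)
    (by
      intro i i' hi
      simp only [Finset.disjoint_biUnion_left, Finset.disjoint_biUnion_right]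
      intro j _ j' _
      exact hb _ _ _ _ (by simp [hi])) Finset.univ
  have h3 : ∀ i, P ({γ | ∀ j, Cut γ (b i j)}ᶜ) = 1 - (1 / 8) ^ k := by
    intro i
    rw [prob_compl_eq_one_sub (hdep i).measurableSet,
      prob_all_cut hd hP (b i) (fun j j' hj => hb _ _ _ _ (by simp [hj]))]
  simp only [h3, Finset.prod_const, Finset.card_univ] at h2
  rw [← h2]
  congr 1
  ext γ
  simp

/-! ### Cuts under shifts and flips -/

theorem cut_shift {d : ℕ} (w : Site d) (γ : Config d) (x : Site d) :
    Cut (shiftCfg w γ) x ↔ Cut γ (x - w) := by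
  have : ∀ t : ℤ, x + t • e1 d - w = x - w + t • e1 d := fun t => by abel
  simp only [Cut, shiftCfg, this]

theorem cut1D (D D' : ℤ → Bool) (p q : ℤ)
    (hp : D (p - 1) = false ∧ D (p + 1) = true ∧ D (p + 2) = false)
    (hq : D (q - 1) = false ∧ D (q + 1) = true ∧ D (q + 2) = false)
    (h : ∀ t, t ≠ p → t ≠ q → D' t = D t) (s : ℤ) :
    (D' (s - 1) = false ∧ D' (s + 1) = true ∧ D' (s + 2) = false) ↔
    (D (s - 1) = false ∧ D (s + 1) = true ∧ D (s + 2) = false) := by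
  have key : ∀ p : ℤ, (D (p - 1) = false ∧ D (p + 1) = true ∧ D (p + 2) = false) →
      D' (p - 1) = D (p - 1) ∧ D' (p + 1) = D (p + 1) ∧ D' (p + 2) = D (p + 2) := by
    intro r hr
    have n1 : ∀ u, (D (u - 1) = false ∧ D (u + 1) = true ∧ D (u + 2) = false) →
        r - 1 ≠ u ∧ r + 1 ≠ u ∧ r + 2 ≠ u := by
      intro u hu
      refine ⟨?_, ?_, ?_⟩
      · intro e
        have : r = u + 1 := by omega
        subst this
        have e2 : u + 1 + 1 = u + 2 := by ring
        rw [e2] at hr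
        simp [hu] at hr
      · rintro rfl
        have e2 : r + 1 + 1 = r + 2 := by ring
        rw [e2] at hu
        simp [hr] at hu
      · rintro rfl
        have e2 : r + 2 - 1 = r + 1 := by ring
        rw [e2] at hu
        simp [hr] at hu
    have a := n1 p hp
    have b := n1 q hq
    exact ⟨h _ a.1 b.1, h _ a.2.1 b.2.1, h _ a.2.2 b.2.2⟩
  constructor
  · intro hs
    have kp := key p hp
    have kq := key q hq
    have n1 : ∀ u, (D' (u - 1) = false ∧ D' (u + 1) = true ∧ D' (u + 2) = false) →
        s - 1 ≠ u ∧ s + 1 ≠ u ∧ s + 2 ≠ u := by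
      intro u hu
      refine ⟨?_, ?_, ?_⟩
      · intro e
        have : s = u + 1 := by omega
        subst this
        have e2 : u + 1 + 1 = u + 2 := by ring
        rw [e2] at hs
        simp [hu] at hs
      · rintro rfl
        have e2 : s + 1 + 1 = s + 2 := by ring
        rw [e2] at hu
        simp [hs] at hu
      · rintro rfl
        have e2 : s + 2 - 1 = s + 1 := by ring
        rw [e2] at hu
        simp [hs] at hu
    have a := n1 p (by rw [kp.1, kp.2.1, kp.2.2]; exact hp)
    have b := n1 q (by rw [kq.1, kq.2.1, kq.2.2]; exact hq)
    rwa [← h _ a.1 b.1, ← h _ a.2.1 b.2.1, ← h _ a.2.2 b.2.2]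
  · intro hs
    obtain ⟨h1, h2, h3⟩ := key s hs
    rwa [h1, h2, h3]

/-- The segment `{-b, …, a}` of the first axis. -/
def segJ (d a b : ℕ) : Finset (Site d) :=
  (Finset.Icc (-(b : ℤ)) a).image (fun t => t • e1 d)

/-- The segment of the origin is `segJ d a b`. -/
def segA (d a b : ℕ) : Set (Config d) :=
  {γ | Cut γ ((a : ℤ) • e1 d) ∧ Cut γ ((-(b : ℤ) - 1) • e1 d) ∧
    ∀ t : ℤ, -(b : ℤ) ≤ t → t < a → ¬ Cut γ (t • e1 d)}

theorem cut_line {d : ℕ} (γ : Config d) (s : ℤ) : Cut γ (s • e1 d) ↔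
    (xor (γ ((s - 1) • e1 d)) (γ ((s - 1 + 1) • e1 d)) = false ∧
     xor (γ ((s + 1) • e1 d)) (γ ((s + 1 + 1) • e1 d)) = true ∧
     xor (γ ((s + 2) • e1 d)) (γ ((s + 2 + 1) • e1 d)) = false) := by
  have h1 : s - 1 + 1 = s := by ring
  have h2 : s + 1 + 1 = s + 2 := by ring
  have h3 : s + 2 + 1 = s + 3 := by ring
  simp only [Cut, ← add_smul, h1, h2, h3, ← sub_eq_add_neg, add_zero]
  generalize γ ((s - 1) • e1 d) = a1
  generalize γ (s • e1 d) = a2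
  generalize γ ((s + 1) • e1 d) = a3
  generalize γ ((s + 2) • e1 d) = a4
  generalize γ ((s + 3) • e1 d) = a5
  revert a1 a2 a3 a4 a5
  decide

theorem mem_segJ {d : ℕ} (hd : 1 ≤ d) (a b : ℕ) (t : ℤ) :
    t • e1 d ∈ segJ d a b ↔ -(b : ℤ) ≤ t ∧ t ≤ a := by
  simp only [segJ, Finset.mem_image, Finset.mem_Icc]
  constructor
  · rintro ⟨u, hu, h⟩
    have : u = t := line_inj hd 0 (by simpa using h)
    exact this ▸ hu
  · intro h
    exact ⟨t, h, rfl⟩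

theorem cut_flip {d : ℕ} (hd : 1 ≤ d) {a b : ℕ} {γ : Config d} (h : γ ∈ segA d a b) :
    Cut (flipOn (segJ d a b : Set (Site d)) γ) = Cut γ := by
  funext x
  apply propext
  by_cases hx : ∃ s : ℤ, x = s • e1 d
  · obtain ⟨s, rfl⟩ := hx
    have hA := (cut_line γ _).1 h.1
    have hB := (cut_line γ _).1 h.2.1
    rw [cut_line, cut_line]
    refine cut1D (fun t => xor (γ (t • e1 d)) (γ ((t + 1) • e1 d)))
      (fun t => xor (flipOn (segJ d a b : Set (Site d)) γ (t • e1 d))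
        (flipOn (segJ d a b : Set (Site d)) γ ((t + 1) • e1 d))) _ _ hA hB ?_ s
    intro t h1 h2
    simp only [flipOn, Finset.mem_coe, mem_segJ hd]
    split_ifs <;> first | rfl | (exfalso; omega) | skip
    simp
  · have : ∀ t : ℤ, flipOn (segJ d a b : Set (Site d)) γ (x + t • e1 d) = γ (x + t • e1 d) := by
      intro t
      simp only [flipOn]
      rw [if_neg]
      simp only [segJ, Finset.coe_image, Set.mem_image, not_exists, not_and]
      intro u _ hu
      exact hx ⟨u - t, by rw [sub_smul, hu]; abel⟩
    simp only [Cut, this]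

/-! ### Centres -/

/-- A seed: `k` consecutive cuts with spacing 5. -/
def Seed {d : ℕ} (F : Site d → Prop) (k : ℕ) (x : Site d) : Prop :=
  ∀ j : Fin k, F (x + (5 * (j : ℤ)) • e1 d)

def gridv {d : ℕ} (k M : ℕ) (i : Fin d → Fin M) : Site d := fun a => 5 * k * ((i a : ℕ) : ℤ)

def pick {d : ℕ} (k M : ℕ) (b : (Fin d → Fin M) → Prop) : Site d :=
  open Classical in if h : ∃ i, b i then gridv k M h.choose else 0

def stepC {d : ℕ} (F : Site d → Prop) (k M : ℕ) (z : Site d) : Site d :=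
  z + pick k M (fun i => Seed F k (z + gridv k M i))

def cen {d : ℕ} (K M : ℕ → ℕ) (F : Site d → Prop) : ℕ → Site d → Site d
  | 0, x => x
  | n + 1, x => stepC F (K (n + 1)) (M (n + 1)) (cen K M F n x)

theorem stepC_shift {d : ℕ} (F : Site d → Prop) (k M : ℕ) (w z : Site d) :
    stepC (fun x => F (x - w)) k M (z + w) = stepC F k M z + w := by
  have : ∀ (v : Site d) (j : ℤ), z + w + v + j • e1 d - w = z + v + j • e1 d := fun v j => by abel
  simp only [stepC, Seed, this]
  abel

theorem cen_shift {d : ℕ} (K M : ℕ → ℕ) (F : Site d → Prop) (w : Site d) (n : ℕ) (x : Site d) :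
    cen K M (fun x => F (x - w)) n (x + w) = cen K M F n x + w := by
  induction n with
  | zero => rfl
  | succ n ih => simp only [cen, ih, stepC_shift]

theorem pick_bound {d : ℕ} (k M : ℕ) (b : (Fin d → Fin M) → Prop) (a : Fin d) :
    0 ≤ pick k M b a ∧ pick k M b a ≤ 5 * k * M := by
  unfold pick
  split_ifs with h
  · have h2 : ((h.choose a : ℕ) : ℤ) ≤ M := by exact_mod_cast (h.choose a).2.le
    constructor
    · simp only [gridv]; positivity
    · simp only [gridv]; gcongr
  · simp only [Pi.zero_apply]
    exact ⟨le_rfl, by positivity⟩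

theorem cen_bound {d : ℕ} {K M : ℕ → ℕ} (hKM : ∀ n, 5 * K n * M n ≤ 2 ^ n) (F : Site d → Prop)
    (n : ℕ) (x : Site d) (a : Fin d) :
    x a ≤ cen K M F n x a ∧ cen K M F n x a ≤ x a + (2 ^ (n + 1) - 2) := by
  induction n with
  | zero => simp [cen]
  | succ n ih =>
    have h := pick_bound (K (n + 1)) (M (n + 1))
      (fun i => Seed F (K (n + 1)) (cen K M F n x + gridv (K (n + 1)) (M (n + 1)) i)) a
    have h2 : (5 * K (n + 1) * M (n + 1) : ℤ) ≤ 2 ^ (n + 1) := by exact_mod_cast hKM (n + 1)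
    simp only [cen, stepC, Pi.add_apply]
    have h3 : (2 : ℤ) ^ (n + 1 + 1) = 2 ^ (n + 1) + 2 ^ (n + 1) := by ring
    constructor
    · linarith [ih.1, h.1]
    · linarith [ih.2, h.2]

/-- An image point of `stepC` is a seed or sees no seed. -/
theorem stepC_image {d : ℕ} (F : Site d → Prop) (k M : ℕ) (z y : Site d)
    (h : stepC F k M z = y) : Seed F k y ∨ ∀ i : Fin d → Fin M, ¬ Seed F k (y + gridv k M i) := by
  unfold stepC pick at h
  split_ifs at h with h'
  · left
    have := h'.choose_spec
    rwa [h] at this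
  · right
    simp only [add_zero] at h
    subst h
    exact fun i hi => h' ⟨i, hi⟩

theorem cen_mono {d : ℕ} (K M : ℕ → ℕ) (F : Site d → Prop) {m n : ℕ} (hmn : m ≤ n) {x y : Site d}
    (h : cen K M F m x = cen K M F m y) : cen K M F n x = cen K M F n y := by
  induction n, hmn using Nat.le_induction with
  | base => exact h
  | succ n _ ih => simp only [cen, ih]

/-! ### The greedy matching -/

/-- A fixed enumeration of the lattice. -/
def vecE (d : ℕ) : ℕ → Site d := (exists_surjective_nat (Site d)).choose

theorem vecE_surj (d : ℕ) : Function.Surjective (vecE d) :=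
  (exists_surjective_nat (Site d)).choose_spec

/-- At step `(n, k)` the head `x` is matched to the tail `x + vecE k`. -/
def Mt {d : ℕ} (γ : Config d) (c : ℕ → Site d → Site d) (n k : ℕ) (x : Site d) : Prop :=
  γ x = true ∧ γ (x + vecE d k) = false ∧ c n x = c n (x + vecE d k) ∧
    ∀ n' k', (_h : n' < n ∨ (n' = n ∧ k' < k)) →
      ¬ Mt γ c n' k' x ∧ ¬ Mt γ c n' k' (x + vecE d k - vecE d k')
termination_by (n, k)
decreasing_by
  all_goals
    rcases _h with h | ⟨rfl, h⟩
    · exact Prod.Lex.left _ _ h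
    · exact Prod.Lex.right _ h

theorem Mt_iff {d : ℕ} (γ : Config d) (c : ℕ → Site d → Site d) (n k : ℕ) (x : Site d) :
    Mt γ c n k x ↔ γ x = true ∧ γ (x + vecE d k) = false ∧ c n x = c n (x + vecE d k) ∧
    ∀ n' k', (n' < n ∨ (n' = n ∧ k' < k)) →
      ¬ Mt γ c n' k' x ∧ ¬ Mt γ c n' k' (x + vecE d k - vecE d k') := by
  rw [Mt]

/-- Head `x` is matched to tail `y` at level at most `n`. -/
def Pr {d : ℕ} (γ : Config d) (c : ℕ → Site d → Site d) (n : ℕ) (x y : Site d) : Prop :=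
  ∃ m ≤ n, ∃ k, y = x + vecE d k ∧ Mt γ c m k x

theorem lex_tri (n k n' k' : ℕ) : (n' < n ∨ (n' = n ∧ k' < k)) ∨ (n = n' ∧ k = k') ∨
    (n < n' ∨ (n = n' ∧ k < k')) := by omega

theorem Pr.color {d : ℕ} {γ : Config d} {c : ℕ → Site d → Site d} {n : ℕ} {x y : Site d}
    (h : Pr γ c n x y) : γ x = true ∧ γ y = false := by
  obtain ⟨m, _, k, rfl, h⟩ := h
  rw [Mt_iff] at h
  exact ⟨h.1, h.2.1⟩

theorem Pr.right_unique {d : ℕ} {γ : Config d} {c : ℕ → Site d → Site d} {n n' : ℕ}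
    {x y y' : Site d} (h : Pr γ c n x y) (h' : Pr γ c n' x y') : y = y' := by
  obtain ⟨m, _, k, rfl, h⟩ := h
  obtain ⟨m', _, k', rfl, h'⟩ := h'
  rcases lex_tri m k m' k' with t | ⟨rfl, rfl⟩ | t
  · exact absurd h' (((Mt_iff _ _ _ _ _).1 h).2.2.2 _ _ t).1
  · rfl
  · exact absurd h (((Mt_iff _ _ _ _ _).1 h').2.2.2 _ _ t).1

theorem Pr.left_unique {d : ℕ} {γ : Config d} {c : ℕ → Site d → Site d} {n n' : ℕ}
    {x x' y : Site d} (h : Pr γ c n x y) (h' : Pr γ c n' x' y) : x = x' := by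
  obtain ⟨m, _, k, hy, h⟩ := h
  obtain ⟨m', _, k', hy', h'⟩ := h'
  rcases lex_tri m k m' k' with t | ⟨rfl, rfl⟩ | t
  · have := (((Mt_iff _ _ _ _ _).1 h).2.2.2 _ _ t).2
    rw [← hy, hy', add_sub_cancel_right] at this
    exact absurd h' this
  · exact add_right_cancel (hy.symm.trans hy')
  · have := (((Mt_iff _ _ _ _ _).1 h').2.2.2 _ _ t).2
    rw [← hy', hy, add_sub_cancel_right] at this
    exact absurd h this

theorem Pr.maximal {d : ℕ} {γ : Config d} {c : ℕ → Site d → Site d} {n : ℕ}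
    {x y : Site d} (hx : γ x = true) (hy : γ y = false) (hc : c n x = c n y) :
    (∃ y', Pr γ c n x y') ∨ ∃ x', Pr γ c n x' y := by
  by_contra hcon
  push Not at hcon
  obtain ⟨k, hk⟩ := vecE_surj d (y - x)
  have hxy : x + vecE d k = y := by rw [hk]; abel
  refine hcon.1 y ⟨n, le_rfl, k, hxy.symm, (Mt_iff _ _ _ _ _).2 ⟨hx, by rwa [hxy], by rwa [hxy],
    fun n' k' h => ⟨fun h1 => ?_, fun h1 => ?_⟩⟩⟩
  · exact hcon.1 _ ⟨n', by omega, k', rfl, h1⟩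
  · rw [hxy] at h1
    exact hcon.2 _ ⟨n', by omega, k', by abel, h1⟩

theorem Pr.same {d : ℕ} {γ : Config d} {c : ℕ → Site d → Site d} {n : ℕ}
    (hmono : ∀ m n, m ≤ n → ∀ x y, c m x = c m y → c n x = c n y)
    {x y : Site d} (h : Pr γ c n x y) : c n x = c n y := by
  obtain ⟨m, hm, k, rfl, h⟩ := h
  exact hmono m n hm _ _ ((Mt_iff _ _ _ _ _).1 h).2.2.1

theorem Pr.mono {d : ℕ} {γ : Config d} {c : ℕ → Site d → Site d} {n n' : ℕ} (hn : n ≤ n')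
    {x y : Site d} (h : Pr γ c n x y) : Pr γ c n' x y := by
  obtain ⟨m, hm, k, rfl, h⟩ := h
  exact ⟨m, hm.trans hn, k, rfl, h⟩

/-- `x` and `y` are partners at level at most `n`. -/
def Par {d : ℕ} (γ : Config d) (c : ℕ → Site d → Site d) (n : ℕ) (x y : Site d) : Prop :=
  Pr γ c n x y ∨ Pr γ c n y x

theorem Par.unique {d : ℕ} {γ : Config d} {c : ℕ → Site d → Site d} {n n' : ℕ}
    {x y y' : Site d} (h : Par γ c n x y) (h' : Par γ c n' x y') : y = y' := by
  rcases h with h | h <;> rcases h' with h' | h'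
  · exact h.right_unique h'
  · exact absurd (h.color.1.symm.trans h'.color.2) (by simp)
  · exact absurd (h'.color.1.symm.trans h.color.2) (by simp)
  · exact h.left_unique h'

theorem Par.symm {d : ℕ} {γ : Config d} {c : ℕ → Site d → Site d} {n : ℕ}
    {x y : Site d} (h : Par γ c n x y) : Par γ c n y x := Or.symm h

theorem Par.color {d : ℕ} {γ : Config d} {c : ℕ → Site d → Site d} {n : ℕ}
    {x y : Site d} (h : Par γ c n x y) : γ y = !(γ x) := by
  rcases h with h | h <;> simp [h.color]

theorem Par.same {d : ℕ} {γ : Config d} {c : ℕ → Site d → Site d} {n : ℕ}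
    (hmono : ∀ m n, m ≤ n → ∀ x y, c m x = c m y → c n x = c n y)
    {x y : Site d} (h : Par γ c n x y) : c n x = c n y := by
  rcases h with h | h
  · exact h.same hmono
  · exact (h.same hmono).symm

/-- The matching. -/
def Phi {d : ℕ} (γ : Config d) (c : ℕ → Site d → Site d) (x : Site d) : Site d :=
  open Classical in if h : ∃ y n, Par γ c n x y then h.choose else x

theorem Phi_eq_of_par {d : ℕ} {γ : Config d} {c : ℕ → Site d → Site d} {n : ℕ}
    {x y : Site d} (h : Par γ c n x y) : Phi γ c x = y := by
  have h' : ∃ y n, Par γ c n x y := ⟨y, n, h⟩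
  unfold Phi
  rw [dif_pos h']
  obtain ⟨m, hm⟩ := h'.choose_spec
  exact hm.unique h

theorem Phi_eq_iff {d : ℕ} (γ : Config d) (c : ℕ → Site d → Site d) (x y : Site d) :
    Phi γ c x = y ↔ (∃ n, Par γ c n x y) ∨ ((¬ ∃ y n, Par γ c n x y) ∧ x = y) := by
  by_cases h' : ∃ y n, Par γ c n x y
  · obtain ⟨z, n, hz⟩ := h'
    rw [Phi_eq_of_par hz]
    constructor
    · rintro rfl
      exact Or.inl ⟨n, hz⟩
    · rintro (⟨m, hm⟩ | ⟨h1, _⟩)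
      · exact hz.unique hm
      · exact absurd ⟨z, n, hz⟩ h1
  · unfold Phi
    rw [dif_neg h']
    constructor
    · exact fun h => Or.inr ⟨h', h⟩
    · rintro (⟨m, hm⟩ | ⟨_, h⟩)
      · exact absurd ⟨y, m, hm⟩ h'
      · exact h

theorem Phi_isMatching {d : ℕ} {γ : Config d} {c : ℕ → Site d → Site d}
    (h : ∀ x, ∃ y n, Par γ c n x y) : IsMatching γ (Phi γ c) := by
  have h1 : ∀ x, Phi γ c (Phi γ c x) = x := by
    intro x
    obtain ⟨y, n, hy⟩ := h x
    rw [Phi_eq_of_par hy, Phi_eq_of_par hy.symm]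
  refine ⟨Function.Involutive.bijective h1, h1, fun x => ?_⟩
  obtain ⟨y, n, hy⟩ := h x
  rw [Phi_eq_of_par hy, hy.color]

/-- Spin as a real number. -/
def sg {d : ℕ} (γ : Config d) (x : Site d) : ℝ := if γ x then 1 else -1

/-- The number of unmatched sites of a cell is at most the absolute value of the sum of spins. -/
theorem unmatched_le {d : ℕ} {γ : Config d} {c : ℕ → Site d → Site d} {n : ℕ}
    (hmono : ∀ m n, m ≤ n → ∀ x y, c m x = c m y → c n x = c n y)
    (z : Site d) (K : Finset (Site d)) (hK : ∀ x, x ∈ K ↔ c n x = z) :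
    (open Classical in ((K.filter fun x => ¬ ∃ y, Par γ c n x y).card : ℝ)) ≤
      |∑ x ∈ K, sg γ x| := by
  classical
  have hsum : ∑ x ∈ K, sg γ x = ∑ x ∈ K.filter (fun x => ¬ ∃ y, Par γ c n x y), sg γ x := by
    rw [← Finset.sum_filter_add_sum_filter_not K (fun x => ∃ y, Par γ c n x y)]
    simp only [add_eq_right]
    refine Finset.sum_involution (fun x _ => Phi γ c x) ?_ ?_ ?_ ?_
    · intro x hx
      obtain ⟨y, hy⟩ := (Finset.mem_filter.1 hx).2
      rw [Phi_eq_of_par hy]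
      simp only [sg, hy.color]
      cases γ x <;> simp
    · intro x hx _
      obtain ⟨y, hy⟩ := (Finset.mem_filter.1 hx).2
      rw [Phi_eq_of_par hy]
      rintro rfl
      have := hy.color
      cases h : γ y <;> simp [h] at this
    · intro x hx
      obtain ⟨y, hy⟩ := (Finset.mem_filter.1 hx).2
      rw [Phi_eq_of_par hy, Finset.mem_filter]
      refine ⟨?_, x, hy.symm⟩
      rw [hK, ← hy.same hmono, ← hK]
      exact (Finset.mem_filter.1 hx).1
    · intro x hx
      obtain ⟨y, hy⟩ := (Finset.mem_filter.1 hx).2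
      rw [Phi_eq_of_par hy, Phi_eq_of_par hy.symm]
  rw [hsum]
  set U := K.filter (fun x => ¬ ∃ y, Par γ c n x y) with hU
  by_cases hh : ∃ x ∈ U, γ x = true
  · obtain ⟨x, hx, hxt⟩ := hh
    have hall : ∀ y ∈ U, sg γ y = 1 := by
      intro y hy
      by_contra hne
      have hyf : γ y = false := by
        cases h : γ y
        · rfl
        · simp [sg, h] at hne
      rw [hU, Finset.mem_filter, hK] at hx hy
      rcases Pr.maximal hxt hyf (hx.1.trans hy.1.symm) with ⟨w, hw⟩ | ⟨w, hw⟩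
      · exact hx.2 ⟨w, Or.inl hw⟩
      · exact hy.2 ⟨w, Or.inr hw⟩
    rw [Finset.sum_congr rfl hall]
    simp
  · push Not at hh
    have hall : ∀ y ∈ U, sg γ y = -1 := by
      intro y hy
      have := hh y hy
      simp [sg, this]
    rw [Finset.sum_congr rfl hall]
    simp

/-! ### Equivariance of the matching -/

theorem Mt_shift {d : ℕ} {γ γ' : Config d} {c c' : ℕ → Site d → Site d} (w : Site d)
    (hγ : ∀ x, γ' (x + w) = γ x) (hc : ∀ n x, c' n (x + w) = c n x + w) :
    ∀ n k x, Mt γ' c' n k (x + w) ↔ Mt γ c n k x := by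
  intro n
  induction n using Nat.strong_induction_on with
  | _ n ihn =>
    intro k
    induction k using Nat.strong_induction_on with
    | _ k ihk =>
      intro x
      rw [Mt_iff, Mt_iff γ c]
      have e1 : x + w + vecE d k = x + vecE d k + w := by abel
      have e2 : ∀ k', x + w + vecE d k - vecE d k' = x + vecE d k - vecE d k' + w := by
        intro k'; abel
      simp only [e2]
      have e3 : ∀ u v : Site d, (u + w = v + w ↔ u = v) :=
        fun u v => ⟨fun h => add_right_cancel h, fun h => by rw [h]⟩
      simp only [e1, hγ, hc, e3]
      have key : ∀ n' k', (n' < n ∨ (n' = n ∧ k' < k)) → ∀ x,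
          (Mt γ' c' n' k' (x + w) ↔ Mt γ c n' k' x) := by
        rintro n' k' (h | ⟨rfl, h⟩) x
        · exact ihn n' h k' x
        · exact ihk k' h x
      refine and_congr_right fun _ => and_congr_right fun _ => and_congr_right fun _ => ?_
      refine forall_congr' fun n' => forall_congr' fun k' => forall_congr' fun h => ?_
      rw [key n' k' h, key n' k' h]

theorem Par_shift {d : ℕ} {γ γ' : Config d} {c c' : ℕ → Site d → Site d} (w : Site d)
    (hγ : ∀ x, γ' (x + w) = γ x) (hc : ∀ n x, c' n (x + w) = c n x + w) (n : ℕ) (x y : Site d) :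
    Par γ' c' n (x + w) (y + w) ↔ Par γ c n x y := by
  have : ∀ x y, Pr γ' c' n (x + w) (y + w) ↔ Pr γ c n x y := by
    intro x y
    simp only [Pr, Mt_shift w hγ hc]
    have : ∀ k, (y + w = x + w + vecE d k ↔ y = x + vecE d k) := by
      intro k
      rw [add_right_comm]
      exact ⟨fun h => add_right_cancel h, fun h => by rw [h]⟩
    simp only [this]
  simp only [Par, this]

theorem Phi_shift {d : ℕ} {γ γ' : Config d} {c c' : ℕ → Site d → Site d} (w : Site d)
    (hγ : ∀ x, γ' (x + w) = γ x) (hc : ∀ n x, c' n (x + w) = c n x + w) (x : Site d) :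
    Phi γ' c' (x + w) = Phi γ c x + w := by
  by_cases h : ∃ y n, Par γ c n x y
  · obtain ⟨y, n, hy⟩ := h
    rw [Phi_eq_of_par hy, Phi_eq_of_par ((Par_shift w hγ hc n x y).2 hy)]
  · have h' : ¬ ∃ y n, Par γ' c' n (x + w) y := by
      rintro ⟨y, n, hy⟩
      refine h ⟨y - w, n, (Par_shift w hγ hc n x (y - w)).1 ?_⟩
      rwa [sub_add_cancel]
    rw [(Phi_eq_iff γ c x x).2 (Or.inr ⟨h, rfl⟩), (Phi_eq_iff γ' c' _ _).2 (Or.inr ⟨h', rfl⟩)]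

/-! ### Measurability -/

theorem measurable_cut {d : ℕ} (x : Site d) : Measurable fun γ : Config d => Cut γ x :=
  measurableSet_setOf.1 (depOn_cut x).measurableSet

theorem measurable_stepC {d : ℕ} (k M : ℕ) (z : Site d) :
    Measurable fun γ : Config d => stepC (Cut γ) k M z := by
  have h : Measurable fun (γ : Config d) (i : Fin d → Fin M) =>
      Seed (Cut γ) k (z + gridv k M i) :=
    measurable_pi_lambda _ fun i => Measurable.forall fun j => measurable_cut _
  have h2 : Measurable fun b : (Fin d → Fin M) → Prop => z + pick k M b := Measurable.of_discrete
  exact h2.comp h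

theorem measurable_cen {d : ℕ} (K M : ℕ → ℕ) (n : ℕ) (x : Site d) :
    Measurable fun γ : Config d => cen K M (Cut γ) n x := by
  induction n with
  | zero => exact measurable_const
  | succ n ih =>
    have : Measurable (fun p : Site d × Config d =>
        stepC (Cut p.2) (K (n + 1)) (M (n + 1)) p.1) :=
      measurable_from_prod_countable_right fun z => measurable_stepC _ _ z
    exact this.comp (ih.prodMk measurable_id)

theorem measurable_Mt {d : ℕ} (K M : ℕ → ℕ) : ∀ n k x,
    Measurable fun γ : Config d => Mt γ (cen K M (Cut γ)) n k x := by
  intro n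
  induction n using Nat.strong_induction_on with
  | _ n ihn =>
    intro k
    induction k using Nat.strong_induction_on with
    | _ k ihk =>
      intro x
      have key : ∀ n' k', (n' < n ∨ (n' = n ∧ k' < k)) → ∀ x,
          Measurable fun γ : Config d => Mt γ (cen K M (Cut γ)) n' k' x := by
        rintro n' k' (h | ⟨rfl, h⟩) x
        · exact ihn n' h k' x
        · exact ihk k' h x
      have hcol : ∀ (y : Site d) (b : Bool), Measurable fun γ : Config d => γ y = b := by
        intro y b
        have hm : Measurable fun γ : Config d => γ y := measurable_pi_apply y
        exact measurableSet_setOf.1 (hm (measurableSet_singleton b))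
      simp only [Mt_iff _ _ n k x]
      refine (hcol _ _).and ((hcol _ _).and (Measurable.and ?_ ?_))
      · exact measurableSet_setOf.1
          (measurableSet_eq_fun (measurable_cen K M n x) (measurable_cen K M n _))
      · refine Measurable.forall fun n' => Measurable.forall fun k' => ?_
        by_cases h : (n' < n ∨ (n' = n ∧ k' < k))
        · simp only [h, true_imp_iff]
          exact (key n' k' h _).not.and (key n' k' h _).not
        · simp only [h, false_imp_iff]
          exact measurable_const

theorem measurable_Par {d : ℕ} (K M : ℕ → ℕ) (n : ℕ) (x y : Site d) :
    Measurable fun γ : Config d => Par γ (cen K M (Cut γ)) n x y := by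
  have : ∀ x y, Measurable fun γ : Config d => Pr γ (cen K M (Cut γ)) n x y := by
    intro x y
    refine Measurable.exists fun m => Measurable.and measurable_const
      (Measurable.exists fun k => Measurable.and measurable_const (measurable_Mt K M _ _ _))
  exact (this x y).or (this y x)

theorem measurable_Phi {d : ℕ} (K M : ℕ → ℕ) (x : Site d) :
    Measurable fun γ : Config d => Phi γ (cen K M (Cut γ)) x := by
  refine measurable_to_countable' fun y => ?_
  have : (fun γ : Config d => Phi γ (cen K M (Cut γ)) x) ⁻¹' {y} =
      {γ | (∃ n, Par γ (cen K M (Cut γ)) n x y) ∨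
        ((¬ ∃ y n, Par γ (cen K M (Cut γ)) n x y) ∧ x = y)} := by
    ext γ
    simp only [Set.mem_preimage, Set.mem_singleton_iff, Phi_eq_iff, Set.mem_setOf_eq]
  rw [this]
  refine measurableSet_setOf.2 (Measurable.or (Measurable.exists fun n => measurable_Par K M n x y)
    (Measurable.and (Measurable.not (Measurable.exists fun y => Measurable.exists fun n =>
      measurable_Par K M n x y)) measurable_const))

/-! ### Probability estimates for cuts -/

theorem win_disjoint {d : ℕ} {x x' : Site d}
    (h : ∀ t t' : ℤ, -1 ≤ t → t ≤ 3 → -1 ≤ t' → t' ≤ 3 → x + t • e1 d ≠ x' + t' • e1 d) :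
    Disjoint (win x) (win x') := by
  rw [Finset.disjoint_left]
  intro y h1 h2
  simp only [win, Finset.mem_image, Finset.mem_Icc] at h1 h2
  obtain ⟨t, ht, rfl⟩ := h1
  obtain ⟨t', ht', e⟩ := h2
  exact h t t' ht.1 ht.2 ht'.1 ht'.2 e.symm

theorem prob_no_cut_line {d : ℕ} (hd : 1 ≤ d) {P : Measure (Config d)}
    (hP : IsBernoulliHalfProduct P) (s : ℤ) (m : ℕ) :
    P {γ | ∀ i : Fin m, ¬ Cut γ ((s + 5 * ((i : ℕ) : ℤ)) • e1 d)} = (7 / 8) ^ m := by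
  have h := prob_no_block hd hP (ι := Fin m) (k := 1)
    (fun i _ => (s + 5 * ((i : ℕ) : ℤ)) • e1 d) (by
      intro i j i' j' hij
      have hii : i ≠ i' := by
        intro e; apply hij; rw [e, Subsingleton.elim j j']
      have hii' : (i : ℕ) ≠ i' := fun e => hii (Fin.ext e)
      refine win_disjoint fun t t' h1 h2 h3 h4 e => ?_
      rw [← add_smul, ← add_smul] at e
      have := line_inj hd 0 (a₁ := s + 5 * ((i : ℕ) : ℤ) + t) (a₂ := s + 5 * ((i' : ℕ) : ℤ) + t')
        (by simpa using e)
      omega)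
  have e : (1 - (1 / 8) ^ 1 : ℝ≥0∞) = 7 / 8 := by
    rw [← ENNReal.toReal_eq_toReal_iff' (by finiteness) (by finiteness)]
    rw [ENNReal.toReal_sub_of_le _ (by finiteness)]
    · norm_num
    · norm_num
  rw [e, Fintype.card_fin] at h
  rw [← h]
  congr 1
  ext γ
  simp

theorem prob_segA {d : ℕ} (hd : 1 ≤ d) {P : Measure (Config d)}
    (hP : IsBernoulliHalfProduct P) (a b : ℕ) :
    P (segA d a b) ≤ (7 / 8) ^ ((a + b) / 5) := by
  rw [← prob_no_cut_line hd hP (-(b : ℤ)) ((a + b) / 5)]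
  refine measure_mono fun γ h i => h.2.2 _ (by omega) ?_
  have := i.2
  omega

theorem measurableSet_segA (d a b : ℕ) : MeasurableSet (segA d a b) := by
  refine measurableSet_setOf.2 (Measurable.and (measurable_cut _) (Measurable.and (measurable_cut _)
    (Measurable.forall fun t => ?_)))
  exact Measurable.imp measurable_const (Measurable.imp measurable_const (measurable_cut _).not)

theorem segA_ae {d : ℕ} (hd : 1 ≤ d) {P : Measure (Config d)}
    (hP : IsBernoulliHalfProduct P) : ∀ᵐ γ ∂P, γ ∈ ⋃ p : ℕ × ℕ, segA d p.1 p.2 := by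
  have hlim : Filter.Tendsto (fun m : ℕ => (7 / 8 : ℝ≥0∞) ^ m) Filter.atTop (nhds 0) := by
    refine ENNReal.tendsto_pow_atTop_nhds_zero_of_lt_one ?_
    rw [ENNReal.div_lt_iff (by norm_num) (by norm_num)]
    norm_num
  have h1 : P {γ | ∀ a : ℕ, ¬ Cut γ ((a : ℤ) • e1 d)} = 0 := by
    refine le_antisymm (ge_of_tendsto' hlim fun m => ?_) (zero_le)
    rw [← prob_no_cut_line hd hP 0 m]
    refine measure_mono fun γ h i => ?_
    have := h (5 * i)
    push_cast at this
    rwa [zero_add]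
  have h2 : P {γ | ∀ b : ℕ, ¬ Cut γ ((-(b : ℤ) - 1) • e1 d)} = 0 := by
    refine le_antisymm (ge_of_tendsto' hlim fun m => ?_) (zero_le)
    rw [← prob_no_cut_line hd hP (-1 - 5 * m) m]
    refine measure_mono fun γ h i => ?_
    have hi := i.2
    have := h (5 * (m - i))
    have e : (-((5 * (m - (i : ℕ)) : ℕ) : ℤ) - 1) = (-1 - 5 * (m : ℤ) + 5 * ((i : ℕ) : ℤ)) := by
      omega
    rwa [e] at this
  have h1' : ∀ᵐ γ ∂P, ¬ ∀ a : ℕ, ¬ Cut γ ((a : ℤ) • e1 d) := by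
    rw [ae_iff]; simpa using h1
  have h2' : ∀ᵐ γ ∂P, ¬ ∀ b : ℕ, ¬ Cut γ ((-(b : ℤ) - 1) • e1 d) := by
    rw [ae_iff]; simpa using h2
  filter_upwards [h1', h2'] with γ g1 g2
  classical
  push Not at g1 g2
  refine Set.mem_iUnion.2 ⟨(Nat.find g1, Nat.find g2), Nat.find_spec g1, Nat.find_spec g2, ?_⟩
  intro t ht1 ht2 hc
  simp only at ht1 ht2
  by_cases ht : 0 ≤ t
  · obtain ⟨u, rfl⟩ := Int.eq_ofNat_of_zero_le ht
    exact Nat.find_min g1 (by omega) hc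
  · obtain ⟨u, hu⟩ := Int.eq_ofNat_of_zero_le (show 0 ≤ -t - 1 by omega)
    have e : t = -(u : ℤ) - 1 := by omega
    subst e
    exact Nat.find_min g2 (by omega) hc

theorem segA_disjoint {d : ℕ} :
    Pairwise (Function.onFun Disjoint fun p : ℕ × ℕ => segA d p.1 p.2) := by
  rintro ⟨a, b⟩ ⟨a', b'⟩ hne
  rw [Function.onFun, Set.disjoint_left]
  intro γ h h'
  apply hne
  simp only [segA, Set.mem_setOf_eq] at h h'
  have h1 : a = a' := by
    rcases lt_trichotomy a a' with hlt | rfl | hlt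
    · exact absurd h.1 (h'.2.2 _ (by omega) (by omega))
    · rfl
    · exact absurd h'.1 (h.2.2 _ (by omega) (by omega))
  have h2 : b = b' := by
    rcases lt_trichotomy b b' with hlt | rfl | hlt
    · exact absurd h.2.1 (h'.2.2 _ (by omega) (by omega))
    · rfl
    · exact absurd h'.2.1 (h.2.2 _ (by omega) (by omega))
  rw [h1, h2]

theorem prob_seed {d : ℕ} (hd : 1 ≤ d) {P : Measure (Config d)}
    (hP : IsBernoulliHalfProduct P) (k M : ℕ) :
    P {γ | Seed (Cut γ) k 0} = (1 / 8) ^ k := by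
  refine prob_all_cut hd hP (fun j : Fin k => (0 : Site d) + (5 * (j : ℤ)) • e1 d) ?_
  intro j j' hj
  have hj' : (j : ℕ) ≠ j' := fun e => hj (Fin.ext e)
  refine win_disjoint fun t t' h1 h2 h3 h4 e => ?_
  rw [add_assoc, add_assoc, ← add_smul, ← add_smul] at e
  have := line_inj hd 0 e
  omega

theorem prob_no_seed {d : ℕ} (hd : 1 ≤ d) {P : Measure (Config d)}
    (hP : IsBernoulliHalfProduct P) (k M : ℕ) :
    P {γ | ∀ i : Fin d → Fin M, ¬ Seed (Cut γ) k (0 + gridv k M i)} =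
      (1 - (1 / 8) ^ k) ^ (M ^ d) := by
  have h := prob_no_block hd hP (ι := Fin d → Fin M) (k := k)
    (fun i j => 0 + gridv k M i + (5 * (j : ℤ)) • e1 d) (by
      intro i j i' j' hij
      refine win_disjoint fun t t' h1 h2 h3 h4 e => hij ?_
      have hk : 0 < k := lt_of_le_of_lt (Nat.zero_le _) j.2
      have hj := j.2
      have hj' := j'.2
      have e0 := congrFun e ⟨0, hd⟩
      simp only [Pi.add_apply, Pi.smul_apply, e1_zero hd, gridv, Pi.zero_apply, zero_add,
        smul_eq_mul, mul_one] at e0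
      have e0' : 5 * ((k : ℤ) * (i ⟨0, hd⟩ : ℕ) + (j : ℕ)) + t =
          5 * ((k : ℤ) * (i' ⟨0, hd⟩ : ℕ) + (j' : ℕ)) + t' := by linarith
      have e1' : (k : ℤ) * (i ⟨0, hd⟩ : ℕ) + (j : ℕ) = (k : ℤ) * (i' ⟨0, hd⟩ : ℕ) + (j' : ℕ) := by
        omega
      have e1'' : k * (i ⟨0, hd⟩ : ℕ) + (j : ℕ) = k * (i' ⟨0, hd⟩ : ℕ) + (j' : ℕ) := by
        exact_mod_cast e1'
      have ej : (j : ℕ) = j' := by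
        have := congrArg (· % k) e1''
        simpa [Nat.mul_add_mod, Nat.mod_eq_of_lt hj, Nat.mod_eq_of_lt hj'] using this
      have ej2 : j = j' := Fin.ext ej
      have et : t = t' := by omega
      subst ej2 et
      have ei : i = i' := by
        funext a
        have ea := congrFun e a
        simp only [Pi.add_apply, gridv] at ea
        have hk5 : (5 * (k : ℤ)) ≠ 0 := by positivity
        have ea' : 5 * (k : ℤ) * ((i a : ℕ) : ℤ) = 5 * (k : ℤ) * ((i' a : ℕ) : ℤ) := by linarith
        have := mul_left_cancel₀ hk5 ea'
        exact Fin.ext (by exact_mod_cast this)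
      rw [ei])
  rw [Fintype.card_fun, Fintype.card_fin, Fintype.card_fin] at h
  exact h

/-! ### The second moment bound -/

theorem measurable_sg {d : ℕ} (x : Site d) : Measurable fun γ : Config d => sg γ x :=
  (measurable_of_countable (fun b : Bool => if b then (1 : ℝ) else -1)).comp (measurable_pi_apply x)

theorem abs_sg {d : ℕ} (γ : Config d) (x : Site d) : |sg γ x| = 1 := by
  unfold sg; split_ifs <;> simp

theorem flipOn_flipOn {d : ℕ} (J : Set (Site d)) (γ : Config d) : flipOn J (flipOn J γ) = γ := by
  funext x
  simp only [flipOn]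
  split_ifs <;> simp

theorem segA_flip {d : ℕ} (hd : 1 ≤ d) {a b : ℕ} {γ : Config d} (h : γ ∈ segA d a b) :
    flipOn (segJ d a b : Set (Site d)) γ ∈ segA d a b := by
  simp only [segA, Set.mem_setOf_eq] at h ⊢
  rw [cut_flip hd h]
  exact h

theorem segA_flip_iff {d : ℕ} (hd : 1 ≤ d) {a b : ℕ} {γ : Config d} :
    flipOn (segJ d a b : Set (Site d)) γ ∈ segA d a b ↔ γ ∈ segA d a b := by
  refine ⟨fun h => ?_, segA_flip hd⟩
  have := segA_flip hd h
  rwa [flipOn_flipOn] at this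

theorem sg_flip_mem {d : ℕ} {J : Set (Site d)} {γ : Config d} {x : Site d} (h : x ∈ J) :
    sg (flipOn J γ) x = - sg γ x := by
  simp only [sg, flipOn, h, if_true]
  cases γ x <;> simp

theorem sg_flip_notMem {d : ℕ} {J : Set (Site d)} {γ : Config d} {x : Site d} (h : x ∉ J) :
    sg (flipOn J γ) x = sg γ x := by
  simp only [sg, flipOn, h, if_false]

/-- pair interaction -/
def qq {d : ℕ} (c : (Site d → Prop) → Site d → Site d) (γ : Config d) (z w : Site d) : ℝ :=
  open Classical in
  if c (Cut γ) 0 = z ∧ c (Cut γ) (z + w) = z then sg γ 0 * sg γ (z + w) else 0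

theorem measurable_qq {d : ℕ} {c : (Site d → Prop) → Site d → Site d}
    (hc : ∀ x, Measurable fun γ : Config d => c (Cut γ) x) (z w : Site d) :
    Measurable fun γ : Config d => qq c γ z w := by
  unfold qq
  refine Measurable.ite ?_ ((measurable_sg _).mul (measurable_sg _)) measurable_const
  exact ((hc 0) (measurableSet_singleton z)).inter ((hc (z + w)) (measurableSet_singleton z))

theorem abs_qq {d : ℕ} (c : (Site d → Prop) → Site d → Site d) (γ : Config d) (z w : Site d) :
    |qq c γ z w| ≤ 1 := by
  unfold qq
  split_ifs
  · rw [abs_mul, abs_sg, abs_sg]; norm_num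
  · simp

theorem integrable_bdd {d : ℕ} {P : Measure (Config d)} [IsProbabilityMeasure P]
    {f : Config d → ℝ} (hf : Measurable f) (C : ℝ) (h : ∀ γ, |f γ| ≤ C) : Integrable f P :=
  Integrable.of_bound hf.aestronglyMeasurable C (Filter.Eventually.of_forall h)

theorem zero_mem_segJ {d : ℕ} (hd : 1 ≤ d) (a b : ℕ) : (0 : Site d) ∈ segJ d a b := by
  have := (mem_segJ hd a b 0).2 (by constructor <;> omega)
  simpa using this

theorem card_segJ (d a b : ℕ) : (segJ d a b).card ≤ a + b + 1 := by
  refine Finset.card_image_le.trans ?_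
  simp only [Int.card_Icc]
  omega

theorem seg_integral {d : ℕ} (hd : 1 ≤ d) {P : Measure (Config d)}
    (hP : IsBernoulliHalfProduct P) {c : (Site d → Prop) → Site d → Site d}
    (hc : ∀ x, Measurable fun γ : Config d => c (Cut γ) x) (B : Finset (Site d)) (a b : ℕ) :
    ∫ γ in segA d a b, ∑ z ∈ B, ∑ w ∈ B, qq c γ z w ∂P ≤
      (a + b + 1) * (7 / 8 : ℝ) ^ ((a + b) / 5) := by
  classical
  have := hP.1
  set J := segJ d a b with hJ
  set A := segA d a b with hA
  let Q1 : Config d → ℝ := fun γ => ∑ z ∈ B, ∑ w ∈ B, if z + w ∈ J then qq c γ z w else 0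
  let Q2 : Config d → ℝ := fun γ => ∑ z ∈ B, ∑ w ∈ B, if z + w ∈ J then 0 else qq c γ z w
  have hm1 : Measurable Q1 := by
    refine Finset.measurable_sum _ fun z _ => Finset.measurable_sum _ fun w _ => ?_
    split_ifs
    · exact measurable_qq hc z w
    · exact measurable_const
  have hm2 : Measurable Q2 := by
    refine Finset.measurable_sum _ fun z _ => Finset.measurable_sum _ fun w _ => ?_
    split_ifs
    · exact measurable_const
    · exact measurable_qq hc z w
  have hb1 : ∀ γ, |Q1 γ| ≤ ∑ z ∈ B, ∑ w ∈ B, (1 : ℝ) := by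
    intro γ
    refine (Finset.abs_sum_le_sum_abs _ _).trans (Finset.sum_le_sum fun z _ => ?_)
    refine (Finset.abs_sum_le_sum_abs _ _).trans (Finset.sum_le_sum fun w _ => ?_)
    split_ifs
    · exact abs_qq c γ z w
    · simp
  have hb2 : ∀ γ, |Q2 γ| ≤ ∑ z ∈ B, ∑ w ∈ B, (1 : ℝ) := by
    intro γ
    refine (Finset.abs_sum_le_sum_abs _ _).trans (Finset.sum_le_sum fun z _ => ?_)
    refine (Finset.abs_sum_le_sum_abs _ _).trans (Finset.sum_le_sum fun w _ => ?_)
    split_ifs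
    · simp
    · exact abs_qq c γ z w
  have hi1 : Integrable Q1 P := integrable_bdd hm1 _ hb1
  have hi2 : Integrable Q2 P := integrable_bdd hm2 _ hb2
  have hsplit : ∀ γ, ∑ z ∈ B, ∑ w ∈ B, qq c γ z w = Q1 γ + Q2 γ := by
    intro γ
    simp only [Q1, Q2, ← Finset.sum_add_distrib]
    refine Finset.sum_congr rfl fun z _ => Finset.sum_congr rfl fun w _ => ?_
    split_ifs <;> simp
  have hAm : MeasurableSet A := measurableSet_segA d a b
  have hzero : ∫ γ in A, Q2 γ ∂P = 0 := by
    have e1 : ∫ γ, A.indicator Q2 γ ∂P = - ∫ γ, A.indicator Q2 γ ∂P := by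
      conv_lhs => rw [← bern_flip hP (J : Set (Site d))]
      rw [integral_map (measurable_flipOn _).aemeasurable
        (hm2.indicator hAm).aestronglyMeasurable, ← integral_neg]
      refine integral_congr_ae (Filter.Eventually.of_forall fun γ => ?_)
      show (segA d a b).indicator Q2 (flipOn (segJ d a b : Set (Site d)) γ) =
        -((segA d a b).indicator Q2 γ)
      by_cases h : γ ∈ segA d a b
      · rw [Set.indicator_of_mem ((segA_flip_iff hd).2 h), Set.indicator_of_mem h]
        simp only [Q2, ← Finset.sum_neg_distrib]
        refine Finset.sum_congr rfl fun z _ => Finset.sum_congr rfl fun w _ => ?_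
        split_ifs with hzw
        · simp
        · unfold qq
          rw [cut_flip hd h, sg_flip_mem (Finset.mem_coe.2 (zero_mem_segJ hd a b)),
            sg_flip_notMem (by rwa [Finset.mem_coe])]
          split_ifs <;> simp
      · rw [Set.indicator_of_notMem (fun h' => h ((segA_flip_iff hd).1 h')),
          Set.indicator_of_notMem h, neg_zero]
    rw [← integral_indicator hAm]
    linarith
  have hQ1 : ∀ γ, Q1 γ ≤ (a + b + 1 : ℝ) := by
    intro γ
    have s1 : Q1 γ ≤ ∑ z ∈ B, if c (Cut γ) 0 = z then (a + b + 1 : ℝ) else 0 := by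
      refine Finset.sum_le_sum fun z _ => ?_
      by_cases h0 : c (Cut γ) 0 = z
      · rw [if_pos h0]
        calc ∑ w ∈ B, (if z + w ∈ J then qq c γ z w else 0)
            ≤ ∑ w ∈ B, (if z + w ∈ J then (1 : ℝ) else 0) := by
              refine Finset.sum_le_sum fun w _ => ?_
              split_ifs
              · exact (le_abs_self _).trans (abs_qq c γ z w)
              · exact le_rfl
          _ = ((B.filter fun w => z + w ∈ J).card : ℝ) := by simp
          _ ≤ ((J.card : ℕ) : ℝ) := by
              exact_mod_cast Finset.card_le_card_of_injOn (fun w => z + w)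
                (fun w hw => (Finset.mem_filter.1 hw).2) (fun _ _ _ _ h => add_left_cancel h)
          _ ≤ (a + b + 1 : ℝ) := by exact_mod_cast card_segJ d a b
      · rw [if_neg h0]
        refine Finset.sum_nonpos fun w _ => ?_
        simp [qq, h0]
    refine s1.trans ?_
    rw [Finset.sum_ite_eq]
    split_ifs
    · exact le_rfl
    · positivity
  simp only [hsplit]
  rw [integral_add hi1.integrableOn hi2.integrableOn, hzero, add_zero]
  have hPA : P.real A ≤ (7 / 8 : ℝ) ^ ((a + b) / 5) := by
    have := ENNReal.toReal_mono (by finiteness) (prob_segA hd hP a b)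
    rw [Measure.real]
    refine this.trans (le_of_eq ?_)
    simp
  calc ∫ γ in A, Q1 γ ∂P ≤ ∫ γ in A, (a + b + 1 : ℝ) ∂P :=
        setIntegral_mono hi1.integrableOn (integrable_const _) hQ1
    _ = P.real A * (a + b + 1) := by simp
    _ ≤ (7 / 8 : ℝ) ^ ((a + b) / 5) * (a + b + 1) := by gcongr
    _ = _ := by ring

def segC : ℝ := ∑' p : ℕ × ℕ, ((p.1 : ℝ) + p.2 + 1) * (7 / 8 : ℝ) ^ ((p.1 + p.2) / 5)

theorem seg_summable :
    Summable fun p : ℕ × ℕ => ((p.1 : ℝ) + p.2 + 1) * (7 / 8 : ℝ) ^ ((p.1 + p.2) / 5) := by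
  have h1 : Summable fun a : ℕ => ((a : ℝ) + 1) * (98 / 100 : ℝ) ^ a := by
    have := summable_pow_mul_geometric_of_norm_lt_one 1 (r := (98 / 100 : ℝ)) (by norm_num)
    have h0 := summable_geometric_of_lt_one (r := (98 / 100 : ℝ)) (by norm_num) (by norm_num)
    refine (this.add h0).congr fun a => ?_
    ring
  have h2 := (h1.mul_of_nonneg h1 (fun a => by positivity) (fun a => by positivity)).mul_left
    ((98 / 100 : ℝ) ^ 5)⁻¹
  refine Summable.of_nonneg_of_le (fun p => by positivity) (fun p => ?_) h2
  obtain ⟨a, b⟩ := p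
  simp only
  have e1 : (7 / 8 : ℝ) ^ ((a + b) / 5) ≤ ((98 / 100 : ℝ) ^ 5)⁻¹ * (98 / 100) ^ (a + b) := by
    have h3 : (7 / 8 : ℝ) ^ ((a + b) / 5) ≤ ((98 / 100 : ℝ) ^ 5) ^ ((a + b) / 5) := by
      gcongr
      norm_num
    refine h3.trans ?_
    rw [← pow_mul, inv_mul_eq_div, le_div_iff₀ (by positivity), ← pow_add]
    exact pow_le_pow_of_le_one (by norm_num) (by norm_num) (by omega)
  have e2 : (a : ℝ) + b + 1 ≤ (a + 1) * (b + 1) := by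
    nlinarith [mul_nonneg (Nat.cast_nonneg (α := ℝ) a) (Nat.cast_nonneg (α := ℝ) b)]
  calc ((a : ℝ) + b + 1) * (7 / 8 : ℝ) ^ ((a + b) / 5)
      ≤ ((a + 1) * (b + 1)) * (((98 / 100 : ℝ) ^ 5)⁻¹ * (98 / 100) ^ (a + b)) := by gcongr
    _ = _ := by rw [pow_add]; ring

theorem seg_hasSum : HasSum (fun p : ℕ × ℕ =>
    ((p.1 : ℝ) + p.2 + 1) * (7 / 8 : ℝ) ^ ((p.1 + p.2) / 5)) segC := by
  unfold segC
  exact seg_summable.hasSum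

theorem seg_sum_bound {d : ℕ} (hd : 1 ≤ d) {P : Measure (Config d)}
    (hP : IsBernoulliHalfProduct P) (f : Config d → ℝ) (hi : Integrable f P)
    (h : ∀ a b : ℕ, ∫ γ in segA d a b, f γ ∂P ≤ (a + b + 1) * (7 / 8 : ℝ) ^ ((a + b) / 5)) :
    ∫ γ, f γ ∂P ≤ segC := by
  have h1 := hasSum_integral_iUnion (μ := P) (f := f)
    (fun p : ℕ × ℕ => measurableSet_segA d p.1 p.2) segA_disjoint hi.integrableOn
  have h2 : ∫ γ in ⋃ p : ℕ × ℕ, segA d p.1 p.2, f γ ∂P = ∫ γ, f γ ∂P := by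
    rw [Measure.restrict_eq_self_of_ae_mem (segA_ae hd hP)]
  rw [← h2]
  exact hasSum_le (fun p : ℕ × ℕ => h p.1 p.2) h1 seg_hasSum

theorem qq_integral {d : ℕ} (hd : 1 ≤ d) {P : Measure (Config d)}
    (hP : IsBernoulliHalfProduct P) {c : (Site d → Prop) → Site d → Site d}
    (hc : ∀ x, Measurable fun γ : Config d => c (Cut γ) x) (B : Finset (Site d)) :
    ∫ γ, ∑ z ∈ B, ∑ w ∈ B, qq c γ z w ∂P ≤ segC := by
  have := hP.1
  have hm : Measurable fun γ => ∑ z ∈ B, ∑ w ∈ B, qq c γ z w :=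
    Finset.measurable_sum _ fun z _ => Finset.measurable_sum _ fun w _ => measurable_qq hc z w
  have hb : ∀ γ, |∑ z ∈ B, ∑ w ∈ B, qq c γ z w| ≤ ∑ z ∈ B, ∑ w ∈ B, (1 : ℝ) := by
    intro γ
    refine (Finset.abs_sum_le_sum_abs _ _).trans (Finset.sum_le_sum fun z _ => ?_)
    exact (Finset.abs_sum_le_sum_abs _ _).trans (Finset.sum_le_sum fun w _ => abs_qq c γ z w)
  exact seg_sum_bound hd hP _ (integrable_bdd hm _ hb) fun a b => seg_integral hd hP hc B a b


/-! ### Mass transport and the tail bound -/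

theorem transport {d : ℕ} {P : Measure (Config d)} (hP : IsBernoulliHalfProduct P)
    {h : Config d → Site d → Site d → ℝ} (hm : ∀ x y, Measurable fun γ => h γ x y)
    (hs : ∀ w γ x y, h (shiftCfg w γ) (x + w) (y + w) = h γ x y)
    (B : Finset (Site d)) (hB : ∀ w ∈ B, -w ∈ B) :
    ∑ y ∈ B, ∫ γ, h γ 0 y ∂P = ∑ y ∈ B, ∫ γ, h γ y 0 ∂P := by
  have key : ∀ y, ∫ γ, h γ 0 y ∂P = ∫ γ, h γ (-y) 0 ∂P := by
    intro y
    conv_rhs => rw [← bern_shift hP (-y)]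
    rw [integral_map (measurable_shiftCfg _).aemeasurable (hm _ _).aestronglyMeasurable]
    refine integral_congr_ae (Filter.Eventually.of_forall fun γ => ?_)
    have := hs (-y) γ 0 y
    rw [zero_add, add_neg_cancel] at this
    exact this.symm
  simp only [key]
  refine Finset.sum_nbij' (fun y => -y) (fun y => -y) hB hB (fun _ _ => neg_neg _)
    (fun _ _ => neg_neg _) (fun _ _ => rfl)

def bx (d n : ℕ) : Finset (Site d) :=
  Finset.Icc (fun _ => -(2 : ℤ) ^ (n + 1)) (fun _ => (2 : ℤ) ^ (n + 1))

theorem mem_bx {d n : ℕ} (x : Site d) :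
    x ∈ bx d n ↔ ∀ a, -(2 : ℤ) ^ (n + 1) ≤ x a ∧ x a ≤ (2 : ℤ) ^ (n + 1) := by
  rw [bx, Finset.mem_Icc, Pi.le_def, Pi.le_def]
  exact forall_and.symm

theorem neg_mem_bx {d n : ℕ} (x : Site d) (h : x ∈ bx d n) : -x ∈ bx d n := by
  rw [mem_bx] at h ⊢
  intro a
  have := h a
  simp only [Pi.neg_apply]
  omega

theorem cut_shift_fun {d : ℕ} (w : Site d) (γ : Config d) :
    Cut (shiftCfg w γ) = fun x => Cut γ (x - w) := by
  funext x
  exact propext (cut_shift w γ x)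

theorem cen_shiftCfg {d : ℕ} (K M : ℕ → ℕ) (w : Site d) (γ : Config d) (n : ℕ) (x : Site d) :
    cen K M (Cut (shiftCfg w γ)) n (x + w) = cen K M (Cut γ) n x + w := by
  rw [cut_shift_fun, cen_shift]

theorem shiftCfg_add {d : ℕ} (w : Site d) (γ : Config d) (x : Site d) :
    shiftCfg w γ (x + w) = γ x := by
  simp [shiftCfg]

theorem sg_shift {d : ℕ} (w : Site d) (γ : Config d) (x : Site d) :
    sg (shiftCfg w γ) (x + w) = sg γ x := by
  simp only [sg, shiftCfg_add]

def Um {d : ℕ} (K M : ℕ → ℕ) (n : ℕ) (γ : Config d) (x : Site d) : Prop :=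
  ¬ ∃ y, Par γ (cen K M (Cut γ)) n x y

theorem measurableSet_Um {d : ℕ} (K M : ℕ → ℕ) (n : ℕ) (x : Site d) :
    MeasurableSet {γ : Config d | Um K M n γ x} :=
  (Measurable.exists fun y => measurable_Par K M n x y).not.setOf

theorem Um_shift {d : ℕ} (K M : ℕ → ℕ) (n : ℕ) (w : Site d) (γ : Config d) (x : Site d) :
    Um K M n (shiftCfg w γ) (x + w) ↔ Um K M n γ x := by
  unfold Um
  have hP := fun y => Par_shift w (shiftCfg_add w γ)
    (fun m x => cen_shiftCfg K M w γ m x) n x y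
  refine not_congr ⟨?_, ?_⟩
  · rintro ⟨y, hy⟩
    refine ⟨y - w, (hP (y - w)).1 ?_⟩
    rwa [sub_add_cancel]
  · rintro ⟨y, hy⟩
    exact ⟨y + w, (hP y).2 hy⟩

/-- spin sum of the cell with centre `z` -/
def SS {d : ℕ} (K M : ℕ → ℕ) (n : ℕ) (γ : Config d) (z : Site d) : ℝ :=
  open Classical in
  ∑ w ∈ bx d n, if cen K M (Cut γ) n (z + w) = z then sg γ (z + w) else 0

theorem measurable_cen_ite {d : ℕ} (K M : ℕ → ℕ) (n : ℕ) (x z : Site d) {f : Config d → ℝ}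
    (hf : Measurable f) :
    Measurable fun γ : Config d => open Classical in
      if cen K M (Cut γ) n x = z then f γ else 0 :=
  Measurable.ite ((measurable_cen K M n x) (measurableSet_singleton z)) hf measurable_const

theorem measurable_SS {d : ℕ} (K M : ℕ → ℕ) (n : ℕ) (z : Site d) :
    Measurable fun γ : Config d => SS K M n γ z :=
  Finset.measurable_sum _ fun w _ => measurable_cen_ite K M n _ _ (measurable_sg _)

theorem abs_SS {d : ℕ} (K M : ℕ → ℕ) (n : ℕ) (γ : Config d) (z : Site d) :
    |SS K M n γ z| ≤ ((bx d n).card : ℝ) := by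
  unfold SS
  refine (Finset.abs_sum_le_sum_abs _ _).trans ?_
  rw [Finset.card_eq_sum_ones, Nat.cast_sum]
  refine Finset.sum_le_sum fun w _ => ?_
  split_ifs
  · rw [abs_sg]; simp
  · simp

theorem SS_shift {d : ℕ} (K M : ℕ → ℕ) (n : ℕ) (w : Site d) (γ : Config d) (z : Site d) :
    SS K M n (shiftCfg w γ) (z + w) = SS K M n γ z := by
  unfold SS
  refine Finset.sum_congr rfl fun v _ => ?_
  rw [show z + w + v = z + v + w by abel, cen_shiftCfg, sg_shift]
  by_cases h : cen K M (Cut γ) n (z + v) = z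
  · rw [if_pos h, if_pos (by rw [h])]
  · rw [if_neg h, if_neg (fun e => h (add_right_cancel e))]

theorem SS_sq {d : ℕ} (hd : 1 ≤ d) {P : Measure (Config d)}
    (hP : IsBernoulliHalfProduct P) (K M : ℕ → ℕ) (n : ℕ) :
    ∫ γ, (SS K M n γ 0) ^ 2 ∂P ≤ segC := by
  classical
  have := hP.1
  let h : Config d → Site d → Site d → ℝ := fun γ x z =>
    if cen K M (Cut γ) n x = z then sg γ x * SS K M n γ z else 0
  have hm : ∀ x y, Measurable fun γ => h γ x y := fun x y =>
    measurable_cen_ite K M n x y ((measurable_sg x).mul (measurable_SS K M n y))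
  have hb : ∀ x y γ, |h γ x y| ≤ ((bx d n).card : ℝ) := by
    intro x y γ
    simp only [h]
    split_ifs
    · rw [abs_mul, abs_sg, one_mul]
      exact abs_SS K M n γ y
    · simp
  have hi : ∀ x y, Integrable (fun γ => h γ x y) P := fun x y =>
    integrable_bdd (hm x y) _ (hb x y)
  have hs : ∀ w γ x y, h (shiftCfg w γ) (x + w) (y + w) = h γ x y := by
    intro w γ x y
    simp only [h]
    rw [cen_shiftCfg, sg_shift, SS_shift]
    by_cases h : cen K M (Cut γ) n x = y
    · rw [if_pos h, if_pos (by rw [h])]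
    · rw [if_neg h, if_neg (fun e => h (add_right_cancel e))]
  have ht := transport hP hm hs (bx d n) neg_mem_bx
  rw [← integral_finset_sum _ (fun y _ => hi 0 y),
    ← integral_finset_sum _ (fun y _ => hi y 0)] at ht
  have e1 : ∀ γ, ∑ y ∈ bx d n, h γ y 0 = (SS K M n γ 0) ^ 2 := by
    intro γ
    rw [sq]
    conv_rhs => enter [1]; unfold SS
    rw [Finset.sum_mul]
    refine Finset.sum_congr rfl fun w _ => ?_
    simp only [h, zero_add, ite_mul, zero_mul]
  have e2 : ∀ γ, ∑ y ∈ bx d n, h γ 0 y =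
      ∑ z ∈ bx d n, ∑ w ∈ bx d n, qq (fun F x => cen K M F n x) γ z w := by
    intro γ
    refine Finset.sum_congr rfl fun z _ => ?_
    simp only [h, qq, SS]
    by_cases h0 : cen K M (Cut γ) n 0 = z
    · rw [if_pos h0, Finset.mul_sum]
      refine Finset.sum_congr rfl fun w _ => ?_
      simp only [h0, true_and, mul_ite, mul_zero]
    · rw [if_neg h0]
      simp only [h0, false_and, if_false, Finset.sum_const_zero]
  simp only [e1, e2] at ht
  rw [← ht]
  exact qq_integral hd hP (fun x => measurable_cen K M n x) (bx d n)

/-- The origin is a centre at level `n`. -/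
def Img {d : ℕ} (K M : ℕ → ℕ) (n : ℕ) : Set (Config d) :=
  {γ | ∃ x, cen K M (Cut γ) n x = 0}

theorem measurableSet_Img {d : ℕ} (K M : ℕ → ℕ) (n : ℕ) :
    MeasurableSet (Img K M n : Set (Config d)) := by
  have : (Img K M n : Set (Config d)) = ⋃ x, {γ | cen K M (Cut γ) n x = 0} := by
    ext γ; simp [Img]
  rw [this]
  exact MeasurableSet.iUnion fun x => (measurable_cen K M n x) (measurableSet_singleton 0)

theorem prob_Img {d : ℕ} (hd : 1 ≤ d) {P : Measure (Config d)}
    (hP : IsBernoulliHalfProduct P) (K M : ℕ → ℕ) (n : ℕ) (ρ : ℝ)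
    (hρ : 1 ≤ n → (1 / 8 : ℝ) ^ (K n) + (1 - (1 / 8) ^ (K n)) ^ (M n ^ d) ≤ ρ)
    (hρ0 : n = 0 → 1 ≤ ρ) : P.real (Img K M n) ≤ ρ := by
  have := hP.1
  rcases n with _ | n
  · exact measureReal_le_one.trans (hρ0 rfl)
  · refine le_trans ?_ (hρ (by omega))
    have hsub : (Img K M (n + 1) : Set (Config d)) ⊆ {γ | Seed (Cut γ) (K (n + 1)) 0} ∪
        {γ | ∀ i : Fin d → Fin (M (n + 1)),
          ¬ Seed (Cut γ) (K (n + 1)) (0 + gridv (K (n + 1)) (M (n + 1)) i)} := by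
      rintro γ ⟨x, hx⟩
      exact stepC_image (Cut γ) _ _ (cen K M (Cut γ) n x) 0 hx
    refine (measureReal_mono hsub).trans ((measureReal_union_le _ _).trans ?_)
    have h1 := prob_seed hd hP (K (n + 1)) (M (n + 1))
    have h2 := prob_no_seed hd hP (K (n + 1)) (M (n + 1))
    rw [Measure.real, Measure.real, h1, h2]
    apply le_of_eq
    rw [ENNReal.toReal_pow, ENNReal.toReal_pow, ENNReal.toReal_sub_of_le, ENNReal.toReal_pow]
    · simp
    · exact pow_le_one₀ (by simp) (by simp)
    · simp

theorem Um_bound {d : ℕ} (hd : 1 ≤ d) {P : Measure (Config d)}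
    (hP : IsBernoulliHalfProduct P) (K M : ℕ → ℕ) (hKM : ∀ n, 5 * K n * M n ≤ 2 ^ n) (n : ℕ)
    (l : ℝ) (hl : 0 < l) :
    P.real {γ | Um K M n γ 0} ≤ (l * segC + l⁻¹ * P.real (Img K M n)) / 2 := by
  classical
  have := hP.1
  let h : Config d → Site d → Site d → ℝ := fun γ x z =>
    if cen K M (Cut γ) n x = z then (if Um K M n γ x then 1 else 0) else 0
  have hmU : ∀ x : Site d, Measurable fun γ : Config d => if Um K M n γ x then (1 : ℝ) else 0 :=
    fun x => Measurable.ite (measurableSet_Um K M n x) measurable_const measurable_const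
  have hm : ∀ x y, Measurable fun γ => h γ x y := fun x y =>
    measurable_cen_ite K M n x y (hmU x)
  have hb : ∀ x y γ, |h γ x y| ≤ 1 := by
    intro x y γ
    simp only [h]
    split_ifs <;> simp
  have hi : ∀ x y, Integrable (fun γ => h γ x y) P := fun x y =>
    integrable_bdd (hm x y) _ (hb x y)
  have hs : ∀ w γ x y, h (shiftCfg w γ) (x + w) (y + w) = h γ x y := by
    intro w γ x y
    simp only [h, Um_shift]
    rw [cen_shiftCfg]
    by_cases h : cen K M (Cut γ) n x = y
    · rw [if_pos h, if_pos (by rw [h])]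
    · rw [if_neg h, if_neg (fun e => h (add_right_cancel e))]
  have ht := transport hP hm hs (bx d n) neg_mem_bx
  rw [← integral_finset_sum _ (fun y _ => hi 0 y),
    ← integral_finset_sum _ (fun y _ => hi y 0)] at ht
  have e1 : ∀ γ, ∑ y ∈ bx d n, h γ 0 y = {γ | Um K M n γ 0}.indicator (fun _ => (1 : ℝ)) γ := by
    intro γ
    simp only [h]
    rw [Finset.sum_ite_eq, if_pos]
    · simp [Set.indicator]
    · rw [mem_bx]
      intro a
      have := cen_bound hKM (Cut γ) n 0 a
      simp only [Pi.zero_apply] at this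
      have h2 : (0 : ℤ) < 2 ^ (n + 1) := by positivity
      omega
  have e2 : ∀ γ, ∑ y ∈ bx d n, h γ y 0 ≤ |SS K M n γ 0| := by
    intro γ
    have hK : ∀ x, x ∈ (bx d n).filter (fun x => cen K M (Cut γ) n x = 0) ↔
        cen K M (Cut γ) n x = 0 := by
      intro x
      rw [Finset.mem_filter, and_iff_right_iff_imp]
      intro hx
      rw [mem_bx]
      intro a
      have := cen_bound hKM (Cut γ) n x a
      rw [hx] at this
      simp only [Pi.zero_apply] at this
      have h2 : (0 : ℤ) < 2 ^ (n + 1) := by positivity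
      omega
    have hu := unmatched_le (γ := γ) (c := cen K M (Cut γ)) (n := n)
      (fun m n hmn x y hxy => cen_mono K M (Cut γ) hmn hxy) 0 _ hK
    have e3 : SS K M n γ 0 =
        ∑ x ∈ (bx d n).filter (fun x => cen K M (Cut γ) n x = 0), sg γ x := by
      rw [Finset.sum_filter]
      simp only [SS, zero_add]
    rw [e3]
    refine le_trans (le_of_eq ?_) hu
    rw [Finset.card_eq_sum_ones, Finset.sum_filter, Finset.sum_filter, Nat.cast_sum]
    refine Finset.sum_congr rfl fun x _ => ?_
    simp only [h, Um]
    split_ifs <;> simp_all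
  have hSi : Integrable (fun γ => SS K M n γ 0) P :=
    integrable_bdd (measurable_SS K M n 0) _ (fun γ => abs_SS K M n γ 0)
  have hS2 : Integrable (fun γ => (SS K M n γ 0) ^ 2) P := by
    refine integrable_bdd ((measurable_SS K M n 0).pow_const 2) (((bx d n).card : ℝ) ^ 2)
      fun γ => ?_
    rw [abs_pow]
    gcongr
    exact abs_SS K M n γ 0
  have hIi : Integrable ((Img K M n : Set (Config d)).indicator (fun _ => (1 : ℝ))) P :=
    (integrable_const _).indicator (measurableSet_Img K M n)
  have e4 : ∀ γ, |SS K M n γ 0| ≤ (l * (SS K M n γ 0) ^ 2 +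
      l⁻¹ * (Img K M n : Set (Config d)).indicator (fun _ => (1 : ℝ)) γ) / 2 := by
    intro γ
    by_cases hγ : γ ∈ (Img K M n : Set (Config d))
    · rw [Set.indicator_of_mem hγ, mul_one, ← sq_abs]
      have h1 : l * l⁻¹ = 1 := mul_inv_cancel₀ hl.ne'
      have h2 : 0 < l⁻¹ := by positivity
      have h3 := mul_nonneg h2.le (sq_nonneg (l * |SS K M n γ 0| - 1))
      have h4 : l⁻¹ * (l * |SS K M n γ 0| - 1) ^ 2 =
        (l * l⁻¹) * l * |SS K M n γ 0| ^ 2 - 2 * (l * l⁻¹) * |SS K M n γ 0| + l⁻¹ := by ring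
      rw [h4, h1] at h3
      linarith
    · have h0 : SS K M n γ 0 = 0 := by
        unfold SS
        refine Finset.sum_eq_zero fun w _ => if_neg fun e => hγ ⟨_, e⟩
      rw [Set.indicator_of_notMem hγ, h0]
      simp
  calc P.real {γ | Um K M n γ 0}
      = ∫ γ, {γ | Um K M n γ 0}.indicator (fun _ => (1 : ℝ)) γ ∂P := by
        rw [integral_indicator (measurableSet_Um K M n 0)]; simp
    _ = ∫ γ, ∑ y ∈ bx d n, h γ y 0 ∂P := by rw [← ht]; simp only [e1]
    _ ≤ ∫ γ, (l * (SS K M n γ 0) ^ 2 +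
      l⁻¹ * (Img K M n : Set (Config d)).indicator (fun _ => (1 : ℝ)) γ) / 2 ∂P := by
        refine integral_mono (integrable_finset_sum _ fun y _ => hi y 0) ?_
          fun γ => (e2 γ).trans (e4 γ)
        exact ((hS2.const_mul l).add (hIi.const_mul l⁻¹)).div_const 2
    _ = (l * ∫ γ, (SS K M n γ 0) ^ 2 ∂P + l⁻¹ * P.real (Img K M n)) / 2 := by
        rw [integral_div, integral_add (hS2.const_mul l) (hIi.const_mul l⁻¹),
          integral_const_mul, integral_const_mul, integral_indicator (measurableSet_Img K M n)]
        simp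
    _ ≤ _ := by
        have := SS_sq hd hP K M n
        gcongr


/-! ### Choice of the parameters -/

def Kp (d n : ℕ) : ℕ := (4 * d * n) / (3 * (d + 4)) + 1

def Mp (d n : ℕ) : ℕ := 2 ^ n / (5 * Kp d n)

theorem KM_le (d n : ℕ) : 5 * Kp d n * Mp d n ≤ 2 ^ n := Nat.mul_div_le _ _

/-- the exponent -/
def bt (d : ℕ) : ℝ := 2 * (d : ℝ) / ((d : ℝ) + 4)

theorem bt_pos {d : ℕ} (hd : 1 ≤ d) : 0 < bt d := by
  have : (1 : ℝ) ≤ d := by exact_mod_cast hd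
  unfold bt
  positivity

theorem bt_le_two (d : ℕ) : bt d ≤ 2 := by
  unfold bt
  rw [div_le_iff₀ (by positivity)]
  linarith

theorem bt_le (d : ℕ) (hd : 1 ≤ d) : 2 * bt d ≤ 4 * d / 5 := by
  have : (1 : ℝ) ≤ d := by exact_mod_cast hd
  unfold bt
  rw [← mul_div_assoc, div_le_div_iff₀ (by positivity) (by positivity)]
  nlinarith

theorem eighth_pow (K : ℕ) : (1 / 8 : ℝ) ^ K = (2 : ℝ) ^ (-(3 * (K : ℝ))) := by
  rw [Real.rpow_neg (by norm_num), Real.rpow_mul (by norm_num), Real.rpow_natCast]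
  rw [one_div, inv_pow]
  norm_num

theorem Kp_pos (d n : ℕ) : 0 < Kp d n := Nat.succ_pos _

theorem Kp_lower (d n : ℕ) : 2 * bt d * n ≤ 3 * (Kp d n : ℝ) := by
  have h : 4 * d * n < 3 * (d + 4) * Kp d n := by
    unfold Kp
    exact Nat.lt_mul_div_succ _ (by omega)
  have h' : (4 * d * n : ℝ) < 3 * (d + 4) * Kp d n := by exact_mod_cast h
  unfold bt
  have h4 : (0 : ℝ) < d + 4 := by positivity
  rw [show 2 * (2 * (d : ℝ) / (d + 4)) * n = (4 * d * n) / (d + 4) by ring, div_le_iff₀ h4]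
  linarith

theorem Kp_upper (d n : ℕ) : 3 * (Kp d n : ℝ) ≤ 2 * bt d * n + 3 := by
  have h : 3 * (d + 4) * ((4 * d * n) / (3 * (d + 4))) ≤ 4 * d * n := Nat.mul_div_le _ _
  have h' : (3 * (d + 4) * (((4 * d * n) / (3 * (d + 4)) : ℕ) : ℝ)) ≤ 4 * d * n := by
    exact_mod_cast h
  unfold bt Kp
  have h4 : (0 : ℝ) < d + 4 := by positivity
  have : 3 * (((4 * d * n) / (3 * (d + 4)) : ℕ) : ℝ) ≤ (4 * d * n) / (d + 4) := by
    rw [le_div_iff₀ h4]; linarith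
  push_cast at this ⊢
  rw [show 2 * (2 * (d : ℝ) / (d + 4)) * n = (4 * d * n) / (d + 4) by ring]
  linarith

theorem one_sub_pow_bound {d : ℕ} (hd : 1 ≤ d) {n : ℕ} (hn : 1 ≤ n)
    (hq : 495 * (n : ℝ) ^ 2 ≤ ((2 : ℝ) ^ (1 / 5 : ℝ)) ^ n) :
    (1 - (1 / 8 : ℝ) ^ (Kp d n)) ^ (Mp d n ^ d) ≤ (2 : ℝ) ^ (-(2 * bt d * n)) := by
  set q : ℝ := (2 : ℝ) ^ (1 / 5 : ℝ) with hqd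
  have hq0 : 0 < q := by positivity
  have hq1 : 1 ≤ q := Real.one_le_rpow (by norm_num) (by norm_num)
  have hq5 : q ^ 5 = 2 := by
    rw [hqd, ← Real.rpow_natCast, ← Real.rpow_mul (by norm_num)]
    norm_num
  have hn1 : (1 : ℝ) ≤ n := by exact_mod_cast hn
  have hd1 : (1 : ℝ) ≤ d := by exact_mod_cast hd
  set p : ℝ := (1 / 8 : ℝ) ^ (Kp d n) with hp
  have hp1 : p ≤ 1 := pow_le_one₀ (by norm_num) (by norm_num)
  have hplow : (2 : ℝ) ^ (-(2 * bt d * n)) / 8 ≤ p := by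
    rw [hp, eighth_pow]
    have : (2 : ℝ) ^ (-(2 * bt d * n)) / 8 = (2 : ℝ) ^ (-(2 * bt d * n + 3)) := by
      rw [neg_add, Real.rpow_add (by norm_num), Real.rpow_neg (by norm_num) 3]
      norm_num
      ring
    rw [this]
    refine Real.rpow_le_rpow_of_exponent_le (by norm_num) ?_
    linarith [Kp_upper d n]
  have hK : (Kp d n : ℝ) ≤ 3 * n := by
    have h1 := Kp_upper d n
    have h2 := mul_le_mul_of_nonneg_right (bt_le_two d) (by linarith : (0 : ℝ) ≤ n)
    linarith
  have hKpos : (0 : ℝ) < Kp d n := by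
    exact_mod_cast Kp_pos d n
  have hM : 32 * n * q ^ (4 * n) ≤ (Mp d n : ℝ) := by
    have h1 : 2 ^ n < 5 * Kp d n * (Mp d n + 1) := by
      unfold Mp
      exact Nat.lt_mul_div_succ _ (Nat.mul_pos (by norm_num) (Kp_pos d n))
    have h2 : (2 : ℝ) ^ n < 5 * Kp d n * (Mp d n + 1) := by exact_mod_cast h1
    have h3 : (2 : ℝ) ^ n = q ^ n * q ^ (4 * n) := by
      rw [← pow_add, ← hq5, ← pow_mul]; congr 1; ring
    have h4 : 1 ≤ q ^ (4 * n) := one_le_pow₀ hq1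
    have h5 : 495 * (n : ℝ) ^ 2 * q ^ (4 * n) < 15 * n * (Mp d n + 1) := by
      calc 495 * (n : ℝ) ^ 2 * q ^ (4 * n) ≤ q ^ n * q ^ (4 * n) := by gcongr
        _ < 5 * Kp d n * (Mp d n + 1) := by rw [← h3]; exact h2
        _ ≤ 5 * (3 * n) * (Mp d n + 1) := by gcongr
        _ = _ := by ring
    have h6 : 33 * n * q ^ (4 * n) < (Mp d n : ℝ) + 1 := by
      have h15 : (0 : ℝ) < 15 * n := by linarith
      refine lt_of_mul_lt_mul_left ?_ h15.le
      calc 15 * n * (33 * n * q ^ (4 * n)) = 495 * (n : ℝ) ^ 2 * q ^ (4 * n) := by ring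
        _ < _ := h5
    nlinarith
  have hMd : 32 * n * q ^ (4 * n * d) ≤ ((Mp d n ^ d : ℕ) : ℝ) := by
    push_cast
    calc 32 * n * q ^ (4 * n * d) ≤ (32 * n) ^ d * q ^ (4 * n * d) := by
          gcongr
          exact le_self_pow₀ (by linarith) (by omega)
      _ = (32 * n * q ^ (4 * n)) ^ d := by rw [pow_mul, ← mul_pow]
      _ ≤ _ := by gcongr
  have hqr : (2 : ℝ) ^ (2 * bt d * n) ≤ q ^ (4 * n * d) := by
    rw [hqd, ← Real.rpow_natCast, ← Real.rpow_mul (by norm_num)]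
    refine Real.rpow_le_rpow_of_exponent_le (by norm_num) ?_
    push_cast
    have := mul_le_mul_of_nonneg_right (bt_le d hd) (by linarith : (0 : ℝ) ≤ n)
    linarith
  have hpN : 4 * (n : ℝ) ≤ p * ((Mp d n ^ d : ℕ) : ℝ) := by
    have e : (2 : ℝ) ^ (-(2 * bt d * n)) * (2 : ℝ) ^ (2 * bt d * n) = 1 := by
      rw [← Real.rpow_add (by norm_num)]; simp
    calc 4 * (n : ℝ) = ((2 : ℝ) ^ (-(2 * bt d * n)) * (2 : ℝ) ^ (2 * bt d * n)) * (4 * n) := by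
          rw [e, one_mul]
      _ = ((2 : ℝ) ^ (-(2 * bt d * n)) / 8) * (32 * n * (2 : ℝ) ^ (2 * bt d * n)) := by ring
      _ ≤ p * (32 * n * q ^ (4 * n * d)) := by gcongr
      _ ≤ _ := by gcongr
  calc (1 - p) ^ (Mp d n ^ d) ≤ (Real.exp (-p)) ^ (Mp d n ^ d) := by
        refine pow_le_pow_left₀ (by linarith) ?_ _
        have := Real.add_one_le_exp (-p)
        linarith
    _ = Real.exp (-(p * ((Mp d n ^ d : ℕ) : ℝ))) := by
        rw [← Real.exp_nat_mul]; congr 1; ring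
    _ ≤ Real.exp (Real.log 2 * (-(2 * bt d * n))) := by
        rw [Real.exp_le_exp]
        have hb := mul_le_mul_of_nonneg_right (bt_le_two d) (by linarith : (0 : ℝ) ≤ n)
        have hl1 : Real.log 2 ≤ 1 := by
          have := Real.log_le_sub_one_of_pos (x := 2) (by norm_num)
          linarith
        have hb0 : 0 ≤ 2 * bt d * n := by
          have := bt_pos hd
          positivity
        have := mul_le_mul_of_nonneg_right hl1 hb0
        linarith
    _ = _ := by rw [Real.rpow_def_of_pos (by norm_num)]

theorem param_bound {d : ℕ} (hd : 1 ≤ d) : ∃ C : ℝ, 1 ≤ C ∧ ∀ n : ℕ,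
    (1 / 8 : ℝ) ^ (Kp d n) + (1 - (1 / 8 : ℝ) ^ (Kp d n)) ^ (Mp d n ^ d) ≤
      C * (2 : ℝ) ^ (-(2 * bt d * n)) := by
  have hq1 : 1 < (2 : ℝ) ^ (1 / 5 : ℝ) := Real.one_lt_rpow (by norm_num) (by norm_num)
  have hlim := tendsto_pow_const_div_const_pow_of_one_lt 2 hq1
  have hev := (hlim.eventually_lt_const (by norm_num : (0 : ℝ) < 1 / 495)).and
    (Filter.eventually_ge_atTop 1)
  obtain ⟨n0, hn0⟩ := Filter.eventually_atTop.1 hev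
  have hb := bt_pos hd
  have hC : 1 ≤ (2 : ℝ) ^ (2 * bt d * n0) := Real.one_le_rpow (by norm_num) (by positivity)
  refine ⟨2 * (2 : ℝ) ^ (2 * bt d * n0), by linarith, fun n => ?_⟩
  have hp1 : (1 / 8 : ℝ) ^ (Kp d n) ≤ 1 := pow_le_one₀ (by norm_num) (by norm_num)
  have hp0 : 0 ≤ (1 / 8 : ℝ) ^ (Kp d n) := by positivity
  by_cases hn : n0 ≤ n
  · obtain ⟨h1, h2⟩ := hn0 n hn
    have h3 : (1 / 8 : ℝ) ^ (Kp d n) ≤ (2 : ℝ) ^ (-(2 * bt d * n)) := by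
      rw [eighth_pow]
      refine Real.rpow_le_rpow_of_exponent_le (by norm_num) ?_
      linarith [Kp_lower d n]
    have h4 := one_sub_pow_bound hd h2 (by
      rw [div_lt_iff₀ (by positivity)] at h1
      linarith)
    have h5 : 0 < (2 : ℝ) ^ (-(2 * bt d * n)) := by positivity
    nlinarith
  · have h1 : (1 - (1 / 8 : ℝ) ^ (Kp d n)) ^ (Mp d n ^ d) ≤ 1 :=
      pow_le_one₀ (by linarith) (by linarith)
    have h2 : 1 ≤ (2 : ℝ) ^ (2 * bt d * n0) * (2 : ℝ) ^ (-(2 * bt d * n)) := by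
      rw [← Real.rpow_add (by norm_num)]
      refine Real.one_le_rpow (by norm_num) ?_
      have : (n : ℝ) ≤ n0 := by exact_mod_cast (not_le.1 hn).le
      have := mul_le_mul_of_nonneg_left this (by positivity : 0 ≤ 2 * bt d)
      linarith
    linarith

/-! ### Conclusion -/

theorem Um_tail {d : ℕ} (hd : 1 ≤ d) {P : Measure (Config d)}
    (hP : IsBernoulliHalfProduct P) : ∃ C : ℝ, 0 ≤ C ∧ ∀ n : ℕ,
      P.real {γ | Um (Kp d) (Mp d) n γ 0} ≤ C * (2 : ℝ) ^ (-(bt d * n)) := by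
  obtain ⟨C, hC1, hC⟩ := param_bound hd
  have hs : 0 ≤ segC := tsum_nonneg fun p => by positivity
  refine ⟨(segC + C) / 2, by positivity, fun n => ?_⟩
  have h1 := Um_bound hd hP (Kp d) (Mp d) (KM_le d) n ((2 : ℝ) ^ (-(bt d * n))) (by positivity)
  have h2 := prob_Img hd hP (Kp d) (Mp d) n _ (fun _ => hC n) (by
    rintro rfl
    simpa using hC1)
  have h3 : ((2 : ℝ) ^ (-(bt d * n)))⁻¹ * (C * (2 : ℝ) ^ (-(2 * bt d * n))) =
      C * (2 : ℝ) ^ (-(bt d * n)) := by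
    rw [← Real.rpow_neg (by norm_num), mul_left_comm, ← Real.rpow_add (by norm_num)]
    congr 2
    ring
  have h4 := mul_le_mul_of_nonneg_left h2 (by positivity : 0 ≤ ((2 : ℝ) ^ (-(bt d * n)))⁻¹)
  rw [h3] at h4
  linarith

theorem norm_le_of_par {d : ℕ} {K M : ℕ → ℕ} (hKM : ∀ n, 5 * K n * M n ≤ 2 ^ n)
    (γ : Config d) (n : ℕ) (y : Site d) (h : Par γ (cen K M (Cut γ)) n 0 y) :
    ‖y‖ ≤ (2 : ℝ) ^ (n + 1) := by
  have hs := Par.same (c := cen K M (Cut γ)) (fun m n hmn x y hxy => cen_mono K M (Cut γ) hmn hxy) h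
  rw [pi_norm_le_iff_of_nonneg (by positivity)]
  intro a
  have h0 := cen_bound hKM (Cut γ) n 0 a
  have hy := cen_bound hKM (Cut γ) n y a
  rw [hs, Pi.zero_apply] at h0
  rw [Int.norm_eq_abs]
  have : |y a| ≤ (2 : ℤ) ^ (n + 1) := by
    rw [abs_le]
    omega
  exact_mod_cast this

theorem ae_matched {d : ℕ} (hd : 1 ≤ d) {P : Measure (Config d)}
    (hP : IsBernoulliHalfProduct P) :
    ∀ᵐ γ ∂P, ∀ x, ∃ y n, Par γ (cen (Kp d) (Mp d) (Cut γ)) n x y := by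
  have := hP.1
  obtain ⟨C, hC0, hC⟩ := Um_tail hd hP
  have h0 : P {γ | ∀ n, Um (Kp d) (Mp d) n γ 0} = 0 := by
    rw [← measureReal_eq_zero_iff]
    refine le_antisymm ?_ measureReal_nonneg
    have hlim : Filter.Tendsto (fun n : ℕ => C * (2 : ℝ) ^ (-(bt d * n))) Filter.atTop
        (nhds (C * 0)) := by
      refine Filter.Tendsto.const_mul C ?_
      have hlt : (2 : ℝ) ^ (-bt d) < 1 :=
        Real.rpow_lt_one_of_one_lt_of_neg (by norm_num) (by linarith [bt_pos hd])
      refine (tendsto_pow_atTop_nhds_zero_of_lt_one (by positivity) hlt).congr fun n => ?_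
      rw [← Real.rpow_natCast, ← Real.rpow_mul (by norm_num), neg_mul]
    rw [mul_zero] at hlim
    refine ge_of_tendsto' hlim fun n => le_trans (measureReal_mono ?_) (hC n)
    intro γ hγ
    exact hγ n
  rw [ae_all_iff]
  intro x
  have hx : P {γ | ∀ n, Um (Kp d) (Mp d) n γ x} = 0 := by
    rw [← h0]
    conv_lhs => rw [← bern_shift hP x]
    rw [Measure.map_apply (measurable_shiftCfg x)]
    · congr 1
      ext γ
      simp only [Set.preimage_setOf_eq, Set.mem_setOf_eq]
      refine forall_congr' fun n => ?_
      have := Um_shift (Kp d) (Mp d) n x γ 0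
      rwa [zero_add] at this
    · have : {γ : Config d | ∀ n, Um (Kp d) (Mp d) n γ x} =
          ⋂ n, {γ | Um (Kp d) (Mp d) n γ x} := by ext γ; simp
      rw [this]
      exact MeasurableSet.iInter fun n => measurableSet_Um _ _ n x
  rw [ae_iff]
  refine measure_mono_null ?_ hx
  intro γ hγ n hn
  apply hγ
  obtain ⟨y, hy⟩ := hn
  exact ⟨y, n, hy⟩

theorem main_thm (d : ℕ) (hd : 1 ≤ d)
    (P : Measure (Config d)) (hP : IsBernoulliHalfProduct P) :
    ∃ (c : ℝ) (Φ : Config d → Site d → Site d),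
      IsMatchingRule P Φ ∧ IsEquivariant P Φ ∧
        ∀ r : ℝ, 2 ≤ r →
          P {γ | r < ZΦ Φ γ} ≤
            ENNReal.ofReal (c * Real.log r ^ 4 * r ^ (-(2 * (d : ℝ) / ((d : ℝ) + 4)))) := by
  have := hP.1
  obtain ⟨C, hC0, hC⟩ := Um_tail hd hP
  have hb := bt_pos hd
  refine ⟨C * (2 : ℝ) ^ (2 * bt d) / Real.log 2 ^ 4,
    fun γ x => Phi γ (cen (Kp d) (Mp d) (Cut γ)) x, ⟨?_, ?_⟩, ?_, ?_⟩
  · exact fun x => measurable_Phi (Kp d) (Mp d) x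
  · filter_upwards [ae_matched hd hP] with γ hγ
    exact Phi_isMatching hγ
  · intro z x
    refine Filter.Eventually.of_forall fun γ => ?_
    exact Phi_shift z (shiftCfg_add z γ) (fun n x => cen_shiftCfg _ _ z γ n x) x
  · intro r hr
    have hr0 : 0 < r := by linarith
    obtain ⟨m, hm1, hm2⟩ := exists_nat_pow_near (by linarith : 1 ≤ r) (by norm_num : (1 : ℝ) < 2)
    obtain ⟨n, rfl⟩ : ∃ n, m = n + 1 := by
      refine Nat.exists_eq_succ_of_ne_zero ?_
      rintro rfl
      norm_num at hm2
      linarith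
    have hsub : {γ : Config d | r < ZΦ (fun γ x => Phi γ (cen (Kp d) (Mp d) (Cut γ)) x) γ} ⊆
        {γ | Um (Kp d) (Mp d) n γ 0} := by
      rintro γ hγ ⟨y, hy⟩
      simp only [Set.mem_setOf_eq, ZΦ, Phi_eq_of_par hy] at hγ
      linarith [norm_le_of_par (KM_le d) γ n y hy]
    refine (measure_mono hsub).trans ?_
    rw [← ofReal_measureReal]
    refine ENNReal.ofReal_le_ofReal ((hC n).trans ?_)
    have hlog2 : 0 < Real.log 2 := Real.log_pos (by norm_num)
    have hlog : 1 ≤ Real.log r ^ 4 / Real.log 2 ^ 4 := by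
      rw [one_le_div (by positivity)]
      gcongr
    have hpow : (2 : ℝ) ^ (-(bt d * n)) ≤ (2 : ℝ) ^ (2 * bt d) * r ^ (-bt d) := by
      have h1 : ((2 : ℝ) ^ (n + 2)) ^ (-bt d) ≤ r ^ (-bt d) :=
        Real.rpow_le_rpow_of_nonpos hr0 hm2.le (by linarith)
      rw [← Real.rpow_natCast, ← Real.rpow_mul (by norm_num)] at h1
      calc (2 : ℝ) ^ (-(bt d * n)) =
            (2 : ℝ) ^ (2 * bt d) * (2 : ℝ) ^ (((n + 2 : ℕ) : ℝ) * -bt d) := by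
            rw [← Real.rpow_add (by norm_num)]
            congr 1
            push_cast
            ring
        _ ≤ _ := by gcongr
    have hX : 0 ≤ C * ((2 : ℝ) ^ (2 * bt d) * r ^ (-bt d)) := by positivity
    show C * (2 : ℝ) ^ (-(bt d * n)) ≤
      C * (2 : ℝ) ^ (2 * bt d) / Real.log 2 ^ 4 * Real.log r ^ 4 * r ^ (-bt d)
    calc C * (2 : ℝ) ^ (-(bt d * n)) ≤ C * ((2 : ℝ) ^ (2 * bt d) * r ^ (-bt d)) := by gcongr
      _ ≤ C * ((2 : ℝ) ^ (2 * bt d) * r ^ (-bt d)) * (Real.log r ^ 4 / Real.log 2 ^ 4) :=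
          le_mul_of_one_le_right hX hlog
      _ = _ := by ring

/-- For every `d ≥ 1` there exist `c = c(d) < ∞` and a translation-equivariant matching
rule `Φ` such that `ℙ(Z_Φ > r) ≤ c (log r)^4 r^{-2d/(d+4)}` for all `r ≥ 2`. -/
theorem statement0 (d : ℕ) (hd : 1 ≤ d)
    (P : Measure (Config d)) (hP : IsBernoulliHalfProduct P) :
    ∃ (c : ℝ) (Φ : Config d → Site d → Site d),
      IsMatchingRule P Φ ∧ IsEquivariant P Φ ∧
        ∀ r : ℝ, 2 ≤ r →
          P {γ | r < ZΦ Φ γ} ≤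
            ENNReal.ofReal (c * Real.log r ^ 4 * r ^ (-(2 * (d : ℝ) / ((d : ℝ) + 4)))) := by
  exact main_thm d hd P hP

end
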